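/- arXiv:math/0309360 — 2 statements merged into one kernel-verified Lean document; each statement's English description precedes it below -/
import Mathlib

section
/- In the tower construction, for every n ≥ 2: Dₙ[X′ₙ] = Bₙ, the elements 1/X′ₙ and Y·X′ₙ lie in Dₙ, and the localization (Dₙ)_{𝓜ₙ} equals Dₙ[1/(Y·X′ₙ)] = Aₙ, where 𝓜ₙ := Mₙ ∩ Dₙ. -/
/- Preamble: the tower construction of Fontana–Kabbaj (Example 3.1).
All rings are realized as subsets/subrings of one ambient field `Amb k0 r`:
the rational function field over `k0` in the indeterminates
`X₁, X₂, …` (indexed by `ℕ`), `Y`, and `Z₁, …, Z_{r-1}`. -/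

noncomputable section

open Polynomial

/-- Index type for the indeterminates: `Sum.inl n` is `Xₙ`, `Sum.inr (Sum.inl ())` is `Y`,
and `Sum.inr (Sum.inr i)` is `Z_{i+1}`. -/
abbrev TowerVars (r : ℕ) : Type := ℕ ⊕ (Unit ⊕ Fin (r - 1))

/-- The ambient field: the fraction field of the polynomial ring over `k0` in all the
indeterminates. -/
abbrev Amb (k0 : Type) [Field k0] (r : ℕ) : Type :=
  FractionRing (MvPolynomial (TowerVars r) k0)

variable (k0 : Type) [Field k0] (r : ℕ)

/-- The indeterminate `Xₙ` as an element of the ambient field. -/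
def ambX (n : ℕ) : Amb k0 r :=
  algebraMap (MvPolynomial (TowerVars r) k0) (Amb k0 r) (MvPolynomial.X (Sum.inl n))

/-- The indeterminate `Y` as an element of the ambient field. -/
def ambY : Amb k0 r :=
  algebraMap (MvPolynomial (TowerVars r) k0) (Amb k0 r) (MvPolynomial.X (Sum.inr (Sum.inl ())))

/-- The indeterminates `Z₁, …, Z_{r-1}` as elements of the ambient field. -/
def ambZ (i : Fin (r - 1)) : Amb k0 r :=
  algebraMap (MvPolynomial (TowerVars r) k0) (Amb k0 r) (MvPolynomial.X (Sum.inr (Sum.inr i)))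

/-- The image of the base field `k0` in the ambient field. -/
def baseSet : Set (Amb k0 r) :=
  Set.range fun c : k0 => algebraMap (MvPolynomial (TowerVars r) k0) (Amb k0 r) (MvPolynomial.C c)

/-- `kₙ := k0(X₁, …, Xₙ)` as a subfield of the ambient field. -/
def kfld (n : ℕ) : Subfield (Amb k0 r) :=
  Subfield.closure (baseSet k0 r ∪ {x | ∃ i, 1 ≤ i ∧ i ≤ n ∧ x = ambX k0 r i})

/-- `Fₙ := kₙ(Z₁, …, Z_{r-1})`. -/
def Ffld (n : ℕ) : Subfield (Amb k0 r) :=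
  Subfield.closure (↑(kfld k0 r n) ∪ Set.range (ambZ k0 r))

/-- `Kₙ := Fₙ(Y)`. -/
def Kfld (n : ℕ) : Subfield (Amb k0 r) :=
  Subfield.closure (↑(Ffld k0 r n) ∪ {ambY k0 r})

/-- The polynomial ring `Fₙ[Y]` as a subring of the ambient field. -/
def polyRing (n : ℕ) : Subring (Amb k0 r) :=
  Subring.closure (↑(Ffld k0 r n) ∪ {ambY k0 r})

/-- `Vₙ := Fₙ[Y]_{(Y)}`, the localization of `Fₙ[Y]` at the prime `(Y)`, as a subset of
the ambient field. -/
def Vset (n : ℕ) : Set (Amb k0 r) :=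
  {x | ∃ f ∈ polyRing k0 r n, ∃ g ∈ polyRing k0 r n,
    (¬ ∃ h ∈ polyRing k0 r n, g = ambY k0 r * h) ∧ x = f / g}

/-- `Mₙ := Y·Fₙ[Y]_{(Y)}`, the maximal ideal of `Vₙ`. -/
def Mset (n : ℕ) : Set (Amb k0 r) :=
  {x | ∃ v ∈ Vset k0 r n, x = ambY k0 r * v}

/-- `Aₙ := kₙ + Mₙ`. -/
def Aset (n : ℕ) : Set (Amb k0 r) :=
  {x | ∃ c ∈ kfld k0 r n, ∃ m ∈ Mset k0 r n, x = c + m}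

/-- `k := ⋃ₙ kₙ` as a subset of the ambient field. -/
def kfldU : Set (Amb k0 r) := ⋃ n, (kfld k0 r n : Set (Amb k0 r))

/-- `F := k(Z₁, …, Z_{r-1}) = ⋃ₙ Fₙ`. -/
def FfldU : Subfield (Amb k0 r) :=
  Subfield.closure (kfldU k0 r ∪ Set.range (ambZ k0 r))

/-- `K := F(Y) = ⋃ₙ Kₙ`. -/
def KfldU : Subfield (Amb k0 r) :=
  Subfield.closure (↑(FfldU k0 r) ∪ {ambY k0 r})

/-- The polynomial ring `F[Y]`. -/
def polyRingU : Subring (Amb k0 r) :=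
  Subring.closure (↑(FfldU k0 r) ∪ {ambY k0 r})

/-- `V := F[Y]_{(Y)}`. -/
def VsetU : Set (Amb k0 r) :=
  {x | ∃ f ∈ polyRingU k0 r, ∃ g ∈ polyRingU k0 r,
    (¬ ∃ h ∈ polyRingU k0 r, g = ambY k0 r * h) ∧ x = f / g}

/-- `M := Y·F[Y]_{(Y)} = ⋃ₙ Mₙ`. -/
def MsetU : Set (Amb k0 r) :=
  {x | ∃ v ∈ VsetU k0 r, x = ambY k0 r * v}

/-- `A := k + M = ⋃ₙ Aₙ`. -/
def AsetU : Set (Amb k0 r) :=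
  {x | ∃ c ∈ kfldU k0 r, ∃ m ∈ MsetU k0 r, x = c + m}

/-- `X′ₙ := (1 + Y·Xₙ)/Y`. -/
def ambX' (n : ℕ) : Amb k0 r :=
  (1 + ambY k0 r * ambX k0 r n) / ambY k0 r

/-- `1` belongs to the ideal of `W` generated by the coefficients of `g`, where `W` is a
subring (given as a subset `S`) of the ambient field. -/
def unitContent (S : Set (Amb k0 r)) (g : Polynomial (Amb k0 r)) : Prop :=
  ∃ (t : Finset ℕ) (u : ℕ → Amb k0 r), (∀ i ∈ t, u i ∈ S) ∧ ∑ i ∈ t, u i * g.coeff i = 1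

/-- The Nagata ring `W(T)` of a subring `W ⊆ Amb k0 r` (given as a subset `S`) in the
"variable" `T`: all fractions `f(T)/g(T)` with `f, g ∈ W[T]` and the coefficients of `g`
generating the unit ideal of `W`.  (When `T` is transcendental over `W` this is the usual
Nagata ring.) -/
def nagataSet (S : Set (Amb k0 r)) (T : Amb k0 r) : Set (Amb k0 r) :=
  {x | ∃ f g : Polynomial (Amb k0 r), (∀ i, f.coeff i ∈ S) ∧ (∀ i, g.coeff i ∈ S) ∧
    unitContent k0 r S g ∧ x = f.eval T / g.eval T}

/-- The valuation overrings of a ring `D` (given as a subset) inside a subfield `L` of the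
ambient field: subrings `W` with `D ⊆ W ⊆ L` such that for every `x ∈ L`, `x ∈ W` or
`x⁻¹ ∈ W`. -/
def valOverringsIn (D : Set (Amb k0 r)) (L : Subfield (Amb k0 r)) : Set (Subring (Amb k0 r)) :=
  {W | D ⊆ ↑W ∧ (W : Set (Amb k0 r)) ⊆ (L : Set (Amb k0 r)) ∧ ∀ x ∈ L, x ∈ W ∨ x⁻¹ ∈ W}

/-- The Kronecker function ring `Kr_{L(T)}(D, b) = ⋂ {W(T) : W a valuation overring of `D`
in `L`}`, realized as a subset of the ambient field. -/
def krSet (D : Set (Amb k0 r)) (L : Subfield (Amb k0 r)) (T : Amb k0 r) : Set (Amb k0 r) :=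
  ⋂ W ∈ valOverringsIn k0 r D L, nagataSet k0 r (↑W) T

/-- The tower `Dₙ`: `D₁ := A₁` and `Dₙ := Bₙ ∩ Aₙ` for `n ≥ 2`, where
`Bₙ := Kr_{K_{n-1}(X′ₙ)}(D_{n-1}, b)`.  (The value at `0` is junk, set to `D₁`.) -/
def Dset : ℕ → Set (Amb k0 r)
  | 0 => Aset k0 r 1
  | 1 => Aset k0 r 1
  | n + 2 => krSet k0 r (Dset (n + 1)) (Kfld k0 r (n + 1)) (ambX' k0 r (n + 2)) ∩ Aset k0 r (n + 2)

/-- `Bₙ := Kr_{K_{n-1}(X′ₙ)}(D_{n-1}, b)` (meaningful for `n ≥ 2`). -/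
def Bset (n : ℕ) : Set (Amb k0 r) :=
  krSet k0 r (Dset k0 r (n - 1)) (Kfld k0 r (n - 1)) (ambX' k0 r n)

/-- `𝓜ₙ := Mₙ ∩ Dₙ`. -/
def MMset (n : ℕ) : Set (Amb k0 r) := Mset k0 r n ∩ Dset k0 r n

/-- `D := ⋃__{n ≥ 1} Dₙ`. -/
def DsetU : Set (Amb k0 r) := ⋃ n, Dset k0 r n

/-- `𝓜 := ⋃_{n ≥ 2} 𝓜ₙ`. -/
def MMsetU : Set (Amb k0 r) := ⋃ n, MMset k0 r (n + 2)

/-- The localization `D_m = {a/b : a, b ∈ D, b ∉ m}` of a subring `D` of the ambient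
field (given as a subset) at (the complement of) a subset `m`. -/
def locAt (D m : Set (Amb k0 r)) : Set (Amb k0 r) :=
  {x | ∃ a ∈ D, ∃ b ∈ D, b ∉ m ∧ x = a / b}

/-- The quotient field, inside the ambient field, of a subring given as a subset. -/
def qfSet (D : Set (Amb k0 r)) : Set (Amb k0 r) :=
  {x | ∃ a ∈ D, ∃ b ∈ D, b ≠ 0 ∧ x = a / b}

/-- The nonunits of a subring of the ambient field, given as a subset: in a local
subring of a field these form the maximal ideal. -/
def nonunitsIn (S : Set (Amb k0 r)) : Set (Amb k0 r) :=
  {x | x ∈ S ∧ (x = 0 ∨ x⁻¹ ∉ S)}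

/-- A subring `A` of the ambient field is a pseudo-valuation domain: it is local, and its
maximal ideal (= set of nonunits) is also the maximal ideal of some valuation overring of
`A` in its quotient field. -/
def IsPVDSub (A : Subring (Amb k0 r)) : Prop :=
  IsLocalRing ↥A ∧
  ∃ W : Subring (Amb k0 r), (A : Set (Amb k0 r)) ⊆ ↑W ∧
    (W : Set (Amb k0 r)) ⊆ qfSet k0 r ↑A ∧
    (∀ x ∈ qfSet k0 r (A : Set (Amb k0 r)), x ∈ W ∨ x⁻¹ ∈ W) ∧
    nonunitsIn k0 r ↑A = nonunitsIn k0 r ↑W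

/-- The valuative dimension of a subring of the ambient field: the supremum of the Krull
dimensions of its valuation overrings (in its quotient field). -/
def subValuativeDim (A : Subring (Amb k0 r)) : WithBot ℕ∞ :=
  ⨆ W : {W : Subring (Amb k0 r) // (A : Set (Amb k0 r)) ⊆ ↑W ∧
      (W : Set (Amb k0 r)) ⊆ qfSet k0 r ↑A ∧
      ∀ x ∈ qfSet k0 r (A : Set (Amb k0 r)), x ∈ W ∨ x⁻¹ ∈ W},
    ringKrullDim ↥(W : Subring (Amb k0 r))


/-- `1` belongs to the ideal generated by the coefficients of a multivariable polynomial
`g` in the subring given by the subset `S`. -/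
def mvUnitContent (S : Set (Amb k0 r)) (g : MvPolynomial ℕ (Amb k0 r)) : Prop :=
  ∃ (t : Finset (ℕ →₀ ℕ)) (u : (ℕ →₀ ℕ) → Amb k0 r),
    (∀ m ∈ t, u m ∈ S) ∧ ∑ m ∈ t, u m * MvPolynomial.coeff m g = 1

/-- The Nagata ring `W(T₀, T₁, …)` of a subring `W` of the ambient field (given as a
subset `S`) in countably many "variables" `T j`: all fractions `f(T)/g(T)` with
`f, g ∈ W[T₀, T₁, …]` and the coefficients of `g` generating the unit ideal of `W`. -/
def nagataSetMv (S : Set (Amb k0 r)) (T : ℕ → Amb k0 r) : Set (Amb k0 r) :=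
  {x | ∃ f g : MvPolynomial ℕ (Amb k0 r),
    (∀ m, MvPolynomial.coeff m f ∈ S) ∧ (∀ m, MvPolynomial.coeff m g ∈ S) ∧
    mvUnitContent k0 r S g ∧ x = MvPolynomial.eval T f / MvPolynomial.eval T g}

/-- A subring `S` of the ambient field is an *essential* domain: `S` is the intersection
of a family of localizations `S_p` at primes `p ∈ Δ`, each of which is a valuation domain
(with quotient field the quotient field of `S`). -/
def IsEssentialSub (S : Subring (Amb k0 r)) : Prop :=
  ∃ Δ : Set (Ideal ↥S),
    (∀ p ∈ Δ, p.IsPrime) ∧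
    (∀ p ∈ Δ, ∀ x ∈ qfSet k0 r (S : Set (Amb k0 r)),
      x ∈ locAt k0 r ↑S (Subtype.val '' (p : Set ↥S)) ∨
      x⁻¹ ∈ locAt k0 r ↑S (Subtype.val '' (p : Set ↥S))) ∧
    (S : Set (Amb k0 r)) = ⋂ p ∈ Δ, locAt k0 r ↑S (Subtype.val '' (p : Set ↥S))

end

section TowerGeneric
open Polynomial

variable {Q : Type*} [Field Q]

theorem tg_coeff_mul {W : Subring Q} {f g : Q[X]} (hf : ∀ i, f.coeff i ∈ W)
    (hg : ∀ i, g.coeff i ∈ W) : ∀ i, (f * g).coeff i ∈ W := by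
  intro i
  rw [coeff_mul]
  exact sum_mem fun x _ => mul_mem (hf _) (hg _)

theorem tg_coeff_add {W : Subring Q} {f g : Q[X]} (hf : ∀ i, f.coeff i ∈ W)
    (hg : ∀ i, g.coeff i ∈ W) : ∀ i, (f + g).coeff i ∈ W := by
  intro i
  rw [coeff_add]
  exact add_mem (hf _) (hg _)

theorem tg_coeff_C {W : Subring Q} {a : Q} (ha : a ∈ W) : ∀ i, (C a : Q[X]).coeff i ∈ W := by
  intro i
  rw [coeff_C]
  split_ifs
  · exact ha
  · exact zero_mem _

theorem tg_coeff_X {W : Subring Q} : ∀ i, (X : Q[X]).coeff i ∈ W := by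
  intro i
  rw [coeff_X]
  split_ifs
  · exact one_mem _
  · exact zero_mem _

theorem tg_coeff_Xpow {W : Subring Q} (m : ℕ) : ∀ i, (X ^ m : Q[X]).coeff i ∈ W := by
  intro i
  rw [coeff_X_pow]
  split_ifs
  · exact one_mem _
  · exact zero_mem _

theorem tg_closure_poly (E : Subring Q) (t : Q) {x : Q}
    (hx : x ∈ Subring.closure ((E : Set Q) ∪ {t})) :
    ∃ p : Q[X], (∀ i, p.coeff i ∈ E) ∧ x = p.eval t := by
  induction hx using Subring.closure_induction with
  | mem x hx =>
    rcases hx with hx | hx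
    · exact ⟨C x, tg_coeff_C hx, by simp⟩
    · exact ⟨X, tg_coeff_X, by simpa using hx⟩
  | zero => exact ⟨0, by simp, by simp⟩
  | one => exact ⟨C 1, tg_coeff_C (one_mem _), by simp⟩
  | add x y _ _ h1 h2 =>
    obtain ⟨p, hp, rfl⟩ := h1
    obtain ⟨q, hq, rfl⟩ := h2
    exact ⟨p + q, tg_coeff_add hp hq, by simp⟩
  | neg x _ h1 =>
    obtain ⟨p, hp, rfl⟩ := h1
    exact ⟨-p, by simpa using hp, by simp⟩
  | mul x y _ _ h1 h2 =>
    obtain ⟨p, hp, rfl⟩ := h1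
    obtain ⟨q, hq, rfl⟩ := h2
    exact ⟨p * q, tg_coeff_mul hp hq, by simp⟩

theorem tg_eval_mem {S : Subring Q} {t : Q} {p : Q[X]} (hp : ∀ i, p.coeff i ∈ S) (ht : t ∈ S) :
    p.eval t ∈ S := by
  rw [eval_eq_sum_range]
  exact sum_mem fun i _ => mul_mem (hp i) (pow_mem ht i)

/-- unit content, generic. -/
def tgUC (S : Set Q) (g : Q[X]) : Prop :=
  ∃ (t : Finset ℕ) (u : ℕ → Q), (∀ i ∈ t, u i ∈ S) ∧ ∑ i ∈ t, u i * g.coeff i = 1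

theorem tgUC_ne {S : Set Q} {g : Q[X]} (h : tgUC S g) : g ≠ 0 := by
  rintro rfl
  obtain ⟨t, u, _, h⟩ := h
  simp at h

theorem tgUC_of {S : Subring Q} {g : Q[X]} (i : ℕ) (h : g.coeff i = 1) : tgUC (S : Set Q) g :=
  ⟨{i}, fun _ => 1, by simp, by simp [h]⟩

theorem tg_local {W : Subring Q} (hW : ∀ a ∈ W, ∀ b ∈ W, a / b ∈ W ∨ b / a ∈ W) :
    IsLocalRing W := by
  have : ValuationRing W := by
    rw [ValuationRing.iff_dvd_total]
    constructor
    intro a b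
    by_cases ha : (a : Q) = 0
    · right
      have : a = 0 := Subtype.ext ha
      simp [this]
    by_cases hb : (b : Q) = 0
    · left
      have : b = 0 := Subtype.ext hb
      simp [this]
    rcases hW a a.2 b b.2 with h | h
    · right
      exact ⟨⟨_, h⟩, Subtype.ext (by simp; field_simp)⟩
    · left
      exact ⟨⟨_, h⟩, Subtype.ext (by simp; field_simp)⟩
  infer_instance

theorem tg_lift {W : Subring Q} {g : Q[X]} (hg : ∀ i, g.coeff i ∈ W) :
    ∃ G : W[X], G.map W.subtype = g := by
  have : g ∈ lifts W.subtype := by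
    rw [lifts_iff_coeff_lifts]
    intro n
    exact ⟨⟨_, hg n⟩, rfl⟩
  exact this

theorem tgUC_iff {W : Subring Q} [IsLocalRing W] (G : W[X]) :
    tgUC (W : Set Q) (G.map W.subtype) ↔ G.map (IsLocalRing.residue W) ≠ 0 := by
  constructor
  · rintro ⟨t, u, hu, h⟩ h0
    have hmem : ∀ i, G.coeff i ∈ IsLocalRing.maximalIdeal W := by
      intro i
      rw [← IsLocalRing.residue_eq_zero_iff, ← coeff_map, h0, coeff_zero]
    have key : (∑ i ∈ t.attach, (⟨u i.1, hu i.1 i.2⟩ : W) * G.coeff i.1) = 1 := by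
      apply Subtype.ext
      rw [← t.sum_attach] at h
      simpa using h
    have : (1 : W) ∈ IsLocalRing.maximalIdeal W := by
      rw [← key]
      exact sum_mem fun i _ => Ideal.mul_mem_left _ _ (hmem _)
    exact (Ideal.ne_top_iff_one _).1 (IsLocalRing.maximalIdeal.isMaximal W).ne_top this
  · intro h
    obtain ⟨i, hi⟩ : ∃ i, (G.map (IsLocalRing.residue W)).coeff i ≠ 0 := by
      by_contra hc
      push Not at hc
      exact h (Polynomial.ext (by simpa using hc))
    rw [coeff_map, IsLocalRing.residue_ne_zero_iff_isUnit] at hi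
    obtain ⟨b, hb⟩ := hi.exists_left_inv
    refine ⟨{i}, fun _ => (b : Q), fun _ _ => b.2, ?_⟩
    have := congrArg Subtype.val hb
    simpa using this

theorem tgUC_mul {W : Subring Q} (hW : ∀ a ∈ W, ∀ b ∈ W, a / b ∈ W ∨ b / a ∈ W) {f g : Q[X]}
    (hf : ∀ i, f.coeff i ∈ W) (hg : ∀ i, g.coeff i ∈ W)
    (uf : tgUC (W : Set Q) f) (ug : tgUC (W : Set Q) g) : tgUC (W : Set Q) (f * g) := by
  have := tg_local hW
  obtain ⟨F, rfl⟩ := tg_lift hf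
  obtain ⟨G, rfl⟩ := tg_lift hg
  rw [← Polynomial.map_mul, tgUC_iff, Polynomial.map_mul]
  exact mul_ne_zero ((tgUC_iff F).1 uf) ((tgUC_iff G).1 ug)

/-- Nagata ring, generic. -/
def tgNag (S : Set Q) (T : Q) : Set Q :=
  {x | ∃ f g : Q[X], (∀ i, f.coeff i ∈ S) ∧ (∀ i, g.coeff i ∈ S) ∧
    tgUC S g ∧ x = f.eval T / g.eval T}

/-- Nagata ring as a subring. -/
def tgNagSub (W : Subring Q) (hW : ∀ a ∈ W, ∀ b ∈ W, a / b ∈ W ∨ b / a ∈ W) (T : Q)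
    (hT : ∀ p : Q[X], (∀ i, p.coeff i ∈ W) → p ≠ 0 → p.eval T ≠ 0) : Subring Q where
  carrier := tgNag (W : Set Q) T
  zero_mem' := ⟨0, 1, by simp, tg_coeff_C (one_mem W), tgUC_of 0 (by simp), by simp⟩
  one_mem' := ⟨1, 1, tg_coeff_C (one_mem W), tg_coeff_C (one_mem W), tgUC_of 0 (by simp), by simp⟩
  add_mem' := by
    rintro x y ⟨f, g, hf, hg, ug, rfl⟩ ⟨f', g', hf', hg', ug', rfl⟩
    refine ⟨f * g' + g * f', g * g', tg_coeff_add (tg_coeff_mul hf hg') (tg_coeff_mul hg hf'),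
      tg_coeff_mul hg hg', tgUC_mul hW hg hg' ug ug', ?_⟩
    rw [div_add_div _ _ (hT g hg (tgUC_ne ug)) (hT g' hg' (tgUC_ne ug'))]
    simp
  mul_mem' := by
    rintro x y ⟨f, g, hf, hg, ug, rfl⟩ ⟨f', g', hf', hg', ug', rfl⟩
    refine ⟨f * f', g * g', tg_coeff_mul hf hf',
      tg_coeff_mul hg hg', tgUC_mul hW hg hg' ug ug', ?_⟩
    rw [div_mul_div_comm]
    simp
  neg_mem' := by
    rintro x ⟨f, g, hf, hg, ug, rfl⟩
    refine ⟨-f, g, by simpa using hf, hg, ug, ?_⟩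
    rw [eval_neg, neg_div]

theorem tgNag_T (W : Subring Q) (T : Q) : T ∈ tgNag (W : Set Q) T :=
  ⟨X, 1, tg_coeff_X, tg_coeff_C (one_mem W), tgUC_of 0 (by simp), by simp⟩

theorem tgNag_Tinv (W : Subring Q) (T : Q) : T⁻¹ ∈ tgNag (W : Set Q) T :=
  ⟨1, X, tg_coeff_C (one_mem W), tg_coeff_X, tgUC_of 1 (by simp), by simp⟩

theorem tgNag_base (W : Subring Q) (T : Q) {a : Q} (ha : a ∈ W) : a ∈ tgNag (W : Set Q) T :=
  ⟨C a, 1, tg_coeff_C ha, tg_coeff_C (one_mem W), tgUC_of 0 (by simp), by simp⟩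

/-- Among finitely many elements of a valuation ring's field, one divides the others. -/
theorem tg_exists_max (W : Subring Q) (L : Subfield Q) (hW : ∀ x ∈ L, x ∈ W ∨ x⁻¹ ∈ W)
    (u : ℕ → Q) (hu : ∀ i, u i ∈ L) (s : Finset ℕ) (hs : s.Nonempty) (hne : ∀ i ∈ s, u i ≠ 0) :
    ∃ j ∈ s, ∀ i ∈ s, u i / u j ∈ W := by
  induction hs using Finset.Nonempty.cons_induction with
  | singleton a => exact ⟨a, by simp, by simp [div_self (hne a (by simp))]⟩
  | cons a s has hs ih =>
    obtain ⟨j, hj, hj'⟩ := ih fun i hi => hne i (by simp [hi])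
    have hj0 : u j ≠ 0 := hne j (by simp [hj])
    have ha0 : u a ≠ 0 := hne a (by simp)
    rcases hW (u a / u j) (div_mem (hu _) (hu _)) with h | h
    · refine ⟨j, by simp [hj], ?_⟩
      intro i hi
      rcases Finset.mem_cons.1 hi with rfl | hi
      · exact h
      · exact hj' i hi
    · refine ⟨a, by simp, ?_⟩
      intro i hi
      rcases Finset.mem_cons.1 hi with rfl | hi
      · rw [div_self ha0]
        exact one_mem _
      · have := mul_mem (hj' i hi) h
        rwa [inv_div, div_mul_div_cancel₀ hj0] at this

/-- If `d * f i ∈ W` for all coefficients and `g` has a coefficient `1`, `d * f(T)/g(T)` lies in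
the Nagata ring. -/
theorem tgNag_frac (W : Subring Q) (L : Subfield Q) (hW : ∀ x ∈ L, x ∈ W ∨ x⁻¹ ∈ W)
    (T : Q) (f g : Q[X]) (hg : ∀ i, g.coeff i ∈ L) (i₀ : ℕ) (hi₀ : g.coeff i₀ = 1)
    (d : Q) (hf : ∀ i, d * f.coeff i ∈ W) : d * (f.eval T / g.eval T) ∈ tgNag (W : Set Q) T := by
  have hi₀s : i₀ ∈ g.support := by simp [hi₀]
  obtain ⟨j, hj, hj'⟩ := tg_exists_max W L hW g.coeff hg g.support ⟨i₀, hi₀s⟩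
    (fun i hi => mem_support_iff.1 hi)
  have hj0 : g.coeff j ≠ 0 := mem_support_iff.1 hj
  have hc : (g.coeff j)⁻¹ ∈ W := by simpa [hi₀] using hj' i₀ hi₀s
  refine ⟨C ((g.coeff j)⁻¹ * d) * f, C (g.coeff j)⁻¹ * g, ?_, ?_, ?_, ?_⟩
  · intro i
    rw [coeff_C_mul, mul_assoc]
    exact mul_mem hc (hf i)
  · intro i
    rw [coeff_C_mul]
    by_cases hi : g.coeff i = 0
    · rw [hi, mul_zero]
      exact zero_mem W
    · have := hj' i (mem_support_iff.2 hi)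
      rwa [div_eq_inv_mul] at this
  · exact tgUC_of j (by rw [coeff_C_mul, inv_mul_cancel₀ hj0])
  · simp only [eval_mul, eval_C]
    rw [mul_assoc, mul_div_mul_left _ _ (inv_ne_zero hj0), mul_div_assoc]

/-! The rings `V`, `M`, `A`. -/

/-- `E[y]` -/
def tgP (E : Subfield Q) (y : Q) : Subring Q := Subring.closure ((E : Set Q) ∪ {y})

theorem tgP_E {E : Subfield Q} {y a : Q} (h : a ∈ E) : a ∈ tgP E y :=
  Subring.subset_closure (Or.inl h)

theorem tgP_y {E : Subfield Q} {y : Q} : y ∈ tgP E y :=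
  Subring.subset_closure (Or.inr rfl)

theorem tgP_poly {E : Subfield Q} {y x : Q} (h : x ∈ tgP E y) :
    ∃ p : Q[X], (∀ i, p.coeff i ∈ E) ∧ x = p.eval y :=
  tg_closure_poly E.toSubring y h

theorem tgP_eval {E : Subfield Q} {y : Q} {p : Q[X]} (h : ∀ i, p.coeff i ∈ E) :
    p.eval y ∈ tgP E y :=
  tg_eval_mem (fun i => tgP_E (h i)) tgP_y

theorem tgP_one {E : Subfield Q} {y : Q}
    (hy : ∀ p : Q[X], (∀ i, p.coeff i ∈ E) → p ≠ 0 → p.eval y ≠ 0) {g : Q} (hg : g ∈ tgP E y) :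
    1 + y * g ≠ 0 := by
  obtain ⟨p, hp, rfl⟩ := tgP_poly hg
  have h := hy (C 1 + X * p) (tg_coeff_add (W := E.toSubring) (tg_coeff_C (one_mem _))
    (tg_coeff_mul tg_coeff_X hp)) ?_
  · simpa using h
  · intro h0
    have := congrArg (fun q => coeff q 0) h0
    simp at this

theorem tgP_decomp {E : Subfield Q} {y x : Q} (h : x ∈ tgP E y) :
    ∃ c ∈ E, ∃ h ∈ tgP E y, x = c + y * h := by
  obtain ⟨p, hp, rfl⟩ := tgP_poly h
  refine ⟨p.coeff 0, hp 0, p.divX.eval y, tgP_eval (by simpa using fun i => hp (i + 1)), ?_⟩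
  conv_lhs => rw [← divX_mul_X_add p]
  simp
  ring

theorem tgP_factor {E : Subfield Q} {y x : Q} (h : x ∈ tgP E y) (hx : x ≠ 0) :
    ∃ j : ℕ, ∃ c ∈ E, c ≠ 0 ∧ ∃ h ∈ tgP E y, x = y ^ j * (c + y * h) := by
  obtain ⟨p, hp, rfl⟩ := tgP_poly h
  clear h
  induction hn : p.natDegree generalizing p with
  | zero =>
    rw [natDegree_eq_zero] at hn
    obtain ⟨c, rfl⟩ := hn
    refine ⟨0, c, by simpa using hp 0, by simpa using hx, 0, zero_mem _, by simp⟩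
  | succ n ih =>
    have e : p.eval y = p.coeff 0 + y * p.divX.eval y := by
      conv_lhs => rw [← divX_mul_X_add p]
      simp
      ring
    have hd : ∀ i, p.divX.coeff i ∈ E := by simpa using fun i => hp (i + 1)
    by_cases h0 : p.coeff 0 = 0
    · rw [h0, zero_add] at e
      obtain ⟨j, c, hc, hc0, k, hk, hk'⟩ := ih p.divX hd
        (fun h => hx (by rw [e, h, mul_zero])) (by rw [natDegree_divX_eq_natDegree_tsub_one, hn]; rfl)
      exact ⟨j + 1, c, hc, hc0, k, hk, by rw [e, hk']; ring⟩
    · exact ⟨0, p.coeff 0, hp 0, h0, p.divX.eval y, tgP_eval hd, by rw [e]; ring⟩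

/-- hypothesis: `y` is transcendental over `E`. -/
def tgTr (E : Subfield Q) (y : Q) : Prop :=
  ∀ p : Q[X], (∀ i, p.coeff i ∈ E) → p ≠ 0 → p.eval y ≠ 0

/-- `V` -/
def tgV (E : Subfield Q) (y : Q) (hy : tgTr E y) : Subring Q where
  carrier := {x | ∃ f ∈ tgP E y, ∃ g ∈ tgP E y, x = f / (1 + y * g)}
  zero_mem' := ⟨0, zero_mem _, 0, zero_mem _, by simp⟩
  one_mem' := ⟨1, one_mem _, 0, zero_mem _, by simp⟩
  add_mem' := by
    rintro _ _ ⟨f, hf, g, hg, rfl⟩ ⟨f', hf', g', hg', rfl⟩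
    refine ⟨f * (1 + y * g') + (1 + y * g) * f', ?_, g + g' + y * g * g', ?_, ?_⟩
    · exact add_mem (mul_mem hf (add_mem (one_mem _) (mul_mem tgP_y hg')))
        (mul_mem (add_mem (one_mem _) (mul_mem tgP_y hg)) hf')
    · exact add_mem (add_mem hg hg') (mul_mem (mul_mem tgP_y hg) hg')
    · rw [div_add_div _ _ (tgP_one hy hg) (tgP_one hy hg')]
      congr 1
      ring
  mul_mem' := by
    rintro _ _ ⟨f, hf, g, hg, rfl⟩ ⟨f', hf', g', hg', rfl⟩
    refine ⟨f * f', mul_mem hf hf', g + g' + y * g * g', ?_, ?_⟩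
    · exact add_mem (add_mem hg hg') (mul_mem (mul_mem tgP_y hg) hg')
    · rw [div_mul_div_comm]
      congr 1
      ring
  neg_mem' := by
    rintro _ ⟨f, hf, g, hg, rfl⟩
    exact ⟨-f, neg_mem hf, g, hg, by rw [neg_div]⟩

theorem tgV_P {E : Subfield Q} {y : Q} (hy : tgTr E y) {x : Q} (hx : x ∈ tgP E y) :
    x ∈ tgV E y hy := ⟨x, hx, 0, zero_mem _, by simp⟩

theorem tgV_iff {E : Subfield Q} {y : Q} (hy : tgTr E y) (x : Q) :
    (∃ f ∈ tgP E y, ∃ g ∈ tgP E y, (¬ ∃ h ∈ tgP E y, g = y * h) ∧ x = f / g) ↔ x ∈ tgV E y hy := by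
  constructor
  · rintro ⟨f, hf, g, hg, hn, rfl⟩
    obtain ⟨c, hc, h, hh, rfl⟩ := tgP_decomp hg
    have hc0 : c ≠ 0 := by
      rintro rfl
      exact hn ⟨h, hh, by simp⟩
    refine ⟨c⁻¹ * f, mul_mem (tgP_E (inv_mem hc)) hf, c⁻¹ * h,
      mul_mem (tgP_E (inv_mem hc)) hh, ?_⟩
    have : 1 + y * (c⁻¹ * h) = c⁻¹ * (c + y * h) := by
      field_simp
    rw [this, mul_div_mul_left _ _ (inv_ne_zero hc0)]
  · rintro ⟨f, hf, g, hg, rfl⟩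
    refine ⟨f, hf, 1 + y * g, add_mem (one_mem _) (mul_mem tgP_y hg), ?_, rfl⟩
    rintro ⟨h, hh, e⟩
    apply tgP_one hy (sub_mem hg hh)
    rw [mul_sub, ← add_sub_assoc, e, sub_self]

theorem tgV_inv {E : Subfield Q} {y : Q} (hy : tgTr E y) {c v : Q} (hc : c ∈ E) (hc0 : c ≠ 0)
    (hv : v ∈ tgV E y hy) : (c + y * v) ≠ 0 ∧ (c + y * v)⁻¹ ∈ tgV E y hy := by
  obtain ⟨f, hf, g, hg, rfl⟩ := hv
  have h1 := tgP_one hy hg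
  have hm : g + c⁻¹ * f ∈ tgP E y := add_mem hg (mul_mem (tgP_E (inv_mem hc)) hf)
  have h2 := tgP_one hy hm
  have e : c + y * (f / (1 + y * g)) = c * (1 + y * (g + c⁻¹ * f)) / (1 + y * g) := by
    field_simp
    ring
  rw [e]
  refine ⟨div_ne_zero (mul_ne_zero hc0 h2) h1, ?_⟩
  refine ⟨c⁻¹ * (1 + y * g), mul_mem (tgP_E (inv_mem hc))
    (add_mem (one_mem _) (mul_mem tgP_y hg)), _, hm, ?_⟩
  rw [inv_div, div_eq_div_iff (mul_ne_zero hc0 h2) h2]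
  field_simp

theorem tgV_pow {E : Subfield Q} {y : Q} (hy : tgTr E y) {x : Q}
    (hx : x ∈ Subfield.closure ((E : Set Q) ∪ {y})) : ∃ m : ℕ, y ^ m * x ∈ tgV E y hy := by
  have hy0 : y ≠ 0 := by
    have := hy X (tg_coeff_X (W := E.toSubring)) X_ne_zero
    simpa using this
  rw [Subfield.mem_closure_iff] at hx
  obtain ⟨p, hp, q, hq, rfl⟩ := hx
  by_cases hq0 : q = 0
  · exact ⟨0, by simp [hq0, zero_mem]⟩
  obtain ⟨j, c, hc, hc0, h, hh, rfl⟩ := tgP_factor hq hq0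
  refine ⟨j, ?_⟩
  have : y ^ j * (p / (y ^ j * (c + y * h))) = p * (c + y * h)⁻¹ := by
    rw [← mul_div_assoc, mul_div_mul_left _ _ (pow_ne_zero _ hy0), div_eq_mul_inv]
  rw [this]
  exact mul_mem (tgV_P hy hp) (tgV_inv hy hc hc0 (tgV_P hy hh)).2

theorem tgV_one {E : Subfield Q} {y : Q} (hy : tgTr E y) {c v : Q} (hc : c ∈ E)
    (hv : v ∈ tgV E y hy) (h : c + y * v = 0) : c = 0 := by
  by_contra hc0
  exact (tgV_inv hy hc hc0 hv).1 h

/-- `A = k + yV` -/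
def tgA (k E : Subfield Q) (hk : k ≤ E) (y : Q) (hy : tgTr E y) : Subring Q where
  carrier := {x | ∃ c ∈ k, ∃ v ∈ tgV E y hy, x = c + y * v}
  zero_mem' := ⟨0, zero_mem _, 0, zero_mem _, by simp⟩
  one_mem' := ⟨1, one_mem _, 0, zero_mem _, by simp⟩
  add_mem' := by
    rintro _ _ ⟨c, hc, v, hv, rfl⟩ ⟨c', hc', v', hv', rfl⟩
    exact ⟨c + c', add_mem hc hc', v + v', add_mem hv hv', by ring⟩
  mul_mem' := by
    rintro _ _ ⟨c, hc, v, hv, rfl⟩ ⟨c', hc', v', hv', rfl⟩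
    refine ⟨c * c', mul_mem hc hc', c * v' + c' * v + y * v * v', ?_, by ring⟩
    exact add_mem (add_mem (mul_mem (tgV_P hy (tgP_E (hk hc))) hv')
      (mul_mem (tgV_P hy (tgP_E (hk hc'))) hv)) (mul_mem (mul_mem (tgV_P hy tgP_y) hv) hv')
  neg_mem' := by
    rintro _ ⟨c, hc, v, hv, rfl⟩
    exact ⟨-c, neg_mem hc, -v, neg_mem hv, by ring⟩

theorem tgA_inv {k E : Subfield Q} (hk : k ≤ E) {y : Q} (hy : tgTr E y) {c v : Q} (hc : c ∈ k)
    (hc0 : c ≠ 0) (hv : v ∈ tgV E y hy) : (c + y * v)⁻¹ ∈ tgA k E hk y hy := by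
  obtain ⟨h1, h2⟩ := tgV_inv hy (hk hc) hc0 hv
  refine ⟨c⁻¹, inv_mem hc, -(c⁻¹ * (v * (c + y * v)⁻¹)), neg_mem (mul_mem
    (tgV_P hy (tgP_E (hk (inv_mem hc)))) (mul_mem hv h2)), ?_⟩
  field_simp
  ring

end TowerGeneric

section TowerSpecific
open Polynomial

variable (k0 : Type) [Field k0] (r : ℕ)

/-- all the variables -/
noncomputable def twv (j : TowerVars r) : Amb k0 r :=
  algebraMap (MvPolynomial (TowerVars r) k0) (Amb k0 r) (MvPolynomial.X j)

theorem tw_indep : AlgebraicIndependent k0 (twv k0 r) := by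
  have h := (MvPolynomial.algebraicIndependent_X (TowerVars r) k0).map'
    (f := IsScalarTower.toAlgHom k0 (MvPolynomial (TowerVars r) k0) (Amb k0 r))
    (IsFractionRing.injective (MvPolynomial (TowerVars r) k0) (Amb k0 r))
  exact h

theorem tw_trans (s : Set (TowerVars r)) (i : TowerVars r) (hi : i ∉ s)
    (E : Subfield (Amb k0 r)) (hE : E ≤ Subfield.closure (baseSet k0 r ∪ twv k0 r '' s)) :
    tgTr E (twv k0 r i) := by
  have h1 : E ≤ (IntermediateField.adjoin k0 (twv k0 r '' s)).toSubfield := by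
    refine hE.trans (Subfield.closure_le.2 ?_)
    rintro x (⟨c, rfl⟩ | hx)
    · exact (IntermediateField.adjoin k0 (twv k0 r '' s)).algebraMap_mem c
    · exact IntermediateField.subset_adjoin _ _ hx
  have h2 : Transcendental (IntermediateField.adjoin k0 (twv k0 r '' s)) (twv k0 r i) :=
    IntermediateField.transcendental_adjoin_iff.2
      ((tw_indep k0 r).transcendental_adjoin hi)
  intro p hp hp0 h0
  obtain ⟨P, rfl⟩ := tg_lift
    (W := (IntermediateField.adjoin k0 (twv k0 r '' s)).toSubfield.toSubring) (g := p)
    (fun i => h1 (hp i))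
  rw [transcendental_iff] at h2
  have h3 := h2 P (by
    rw [eval_map] at h0
    exact h0)
  exact hp0 (by rw [h3, Polynomial.map_zero])

theorem tw_kF (n : ℕ) : kfld k0 r n ≤ Ffld k0 r n :=
  fun _ hx => Subfield.subset_closure (Or.inl hx)

theorem tw_FK (n : ℕ) : Ffld k0 r n ≤ Kfld k0 r n :=
  fun _ hx => Subfield.subset_closure (Or.inl hx)

theorem tw_YK (n : ℕ) : ambY k0 r ∈ Kfld k0 r n :=
  Subfield.subset_closure (Or.inr rfl)

theorem tw_Xk (n i : ℕ) (h1 : 1 ≤ i) (h2 : i ≤ n) : ambX k0 r i ∈ kfld k0 r n :=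
  Subfield.subset_closure (Or.inr ⟨i, h1, h2, rfl⟩)

theorem tw_k_le (n : ℕ) (S : Subfield (Amb k0 r)) (hb : baseSet k0 r ⊆ S)
    (hX : ∀ i, 1 ≤ i → i ≤ n → ambX k0 r i ∈ S) : kfld k0 r n ≤ S := by
  refine Subfield.closure_le.2 ?_
  rintro x (hx | ⟨i, h1, h2, rfl⟩)
  · exact hb hx
  · exact hX i h1 h2

theorem tw_F_le (n : ℕ) (S : Subfield (Amb k0 r)) (hb : kfld k0 r n ≤ S)
    (hZ : ∀ i, ambZ k0 r i ∈ S) : Ffld k0 r n ≤ S := by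
  refine Subfield.closure_le.2 ?_
  rintro x (hx | ⟨i, rfl⟩)
  · exact hb hx
  · exact hZ i

theorem tw_K_le (n : ℕ) (S : Subfield (Amb k0 r)) (hb : Ffld k0 r n ≤ S)
    (hY : ambY k0 r ∈ S) : Kfld k0 r n ≤ S := by
  refine Subfield.closure_le.2 ?_
  rintro x (hx | hx)
  · exact hb hx
  · rw [Set.mem_singleton_iff] at hx
    rw [hx]
    exact hY

theorem tw_trY (n : ℕ) : tgTr (Ffld k0 r n) (ambY k0 r) := by
  refine tw_trans k0 r {j | j ≠ Sum.inr (Sum.inl ())} (Sum.inr (Sum.inl ())) (by simp) _ ?_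
  refine tw_F_le _ _ _ _ (tw_k_le _ _ _ _ ?_ ?_) ?_
  · exact fun x hx => Subfield.subset_closure (Or.inl hx)
  · exact fun i _ _ => Subfield.subset_closure (Or.inr ⟨Sum.inl i, by simp, rfl⟩)
  · exact fun i => Subfield.subset_closure (Or.inr ⟨Sum.inr (Sum.inr i), by simp, rfl⟩)

theorem tw_trX (n : ℕ) : tgTr (Kfld k0 r n) (ambX k0 r (n + 1)) := by
  refine tw_trans k0 r {j | j ≠ Sum.inl (n + 1)} (Sum.inl (n + 1)) (by simp) _ ?_
  refine tw_K_le _ _ _ _ (tw_F_le _ _ _ _ (tw_k_le _ _ _ _ ?_ ?_) ?_) ?_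
  · exact fun x hx => Subfield.subset_closure (Or.inl hx)
  · refine fun i _ h => Subfield.subset_closure (Or.inr ⟨Sum.inl i, ?_, rfl⟩)
    simp only [ne_eq, Set.mem_ofPred_eq, Sum.inl.injEq]
    omega
  · exact fun i => Subfield.subset_closure (Or.inr ⟨Sum.inr (Sum.inr i), by simp, rfl⟩)
  · exact Subfield.subset_closure (Or.inr ⟨Sum.inr (Sum.inl ()), by simp, rfl⟩)

theorem tg_tr_shift {Q : Type*} [Field Q] (K : Subfield Q) (t a : Q) (ha : a ∈ K)
    (h : tgTr K t) : tgTr K (a + t) := by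
  intro p hp hp0 h0
  obtain ⟨P, rfl⟩ := tg_lift (W := K.toSubring) hp
  have e : ((P.comp (X + C ⟨a, ha⟩)).map K.toSubring.subtype) =
      (P.map K.toSubring.subtype).comp (X + C a) := by
    rw [Polynomial.map_comp]
    simp
  refine h ((P.map K.toSubring.subtype).comp (X + C a)) ?_ ?_ ?_
  · intro i
    rw [← e, coeff_map]
    exact Subtype.property _
  · intro hc
    apply hp0
    have := congrArg (fun q => q.comp (X - C a)) hc
    simpa [comp_assoc] using this
  · rw [eval_comp]
    simpa [add_comm] using h0

theorem tw_Y0 : ambY k0 r ≠ 0 := by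
  have := tw_trY k0 r 0 X (tg_coeff_X (W := (Ffld k0 r 0).toSubring)) X_ne_zero
  simpa using this

theorem tw_X'_eq (n : ℕ) : ambX' k0 r n = (ambY k0 r)⁻¹ + ambX k0 r n := by
  have := tw_Y0 k0 r
  rw [ambX']
  field_simp

theorem tw_trT (n : ℕ) : tgTr (Kfld k0 r n) (ambX' k0 r (n + 1)) := by
  rw [tw_X'_eq]
  exact tg_tr_shift _ _ _ (inv_mem (tw_YK k0 r n)) (tw_trX k0 r n)

theorem tw_mono (n : ℕ) : Kfld k0 r n ≤ Kfld k0 r (n + 1) := by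
  refine tw_K_le _ _ _ _ (tw_F_le _ _ _ _ (tw_k_le _ _ _ _ ?_ ?_) ?_) (tw_YK k0 r _)
  · exact fun x hx => tw_FK _ _ _ (tw_kF _ _ _ (Subfield.subset_closure (Or.inl hx)))
  · exact fun i h1 h2 => tw_FK _ _ _ (tw_kF _ _ _ (tw_Xk _ _ _ i h1 (by omega)))
  · exact fun i => tw_FK _ _ _ (Subfield.subset_closure (Or.inr ⟨i, rfl⟩))

theorem tw_TK (n : ℕ) : ambX' k0 r (n + 1) ∈ Kfld k0 r (n + 1) := by
  rw [tw_X'_eq]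
  exact add_mem (inv_mem (tw_YK k0 r _))
    (tw_FK _ _ _ (tw_kF _ _ _ (tw_Xk _ _ _ _ (by omega) le_rfl)))

/-- Elements of `K_{n+1}` are rational functions in `T` over `K_n`. -/
theorem tw_ratT (n : ℕ) {x : Amb k0 r} (hx : x ∈ Kfld k0 r (n + 1)) :
    ∃ f g : (Amb k0 r)[X], (∀ i, f.coeff i ∈ Kfld k0 r n) ∧ (∀ i, g.coeff i ∈ Kfld k0 r n) ∧
      x = f.eval (ambX' k0 r (n + 1)) / g.eval (ambX' k0 r (n + 1)) := by
  have hle : Kfld k0 r (n + 1) ≤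
      Subfield.closure ((Kfld k0 r n : Set (Amb k0 r)) ∪ {ambX' k0 r (n + 1)}) := by
    have hK : Kfld k0 r n ≤
      Subfield.closure ((Kfld k0 r n : Set (Amb k0 r)) ∪ {ambX' k0 r (n + 1)}) :=
        fun x hx => Subfield.subset_closure (Or.inl hx)
    refine tw_K_le _ _ _ _ (tw_F_le _ _ _ _ (tw_k_le _ _ _ _ ?_ ?_) ?_) (hK (tw_YK k0 r _))
    · exact fun x hx => hK (tw_FK _ _ _ (tw_kF _ _ _ (Subfield.subset_closure (Or.inl hx))))
    · intro i h1 h2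
      rcases Nat.lt_or_ge n i with h | h
      · obtain rfl : i = n + 1 := by omega
        have e : ambX k0 r (n + 1) = ambX' k0 r (n + 1) - (ambY k0 r)⁻¹ := by
          rw [tw_X'_eq]
          ring
        rw [e]
        exact sub_mem (Subfield.subset_closure (Or.inr rfl)) (inv_mem (hK (tw_YK k0 r _)))
      · exact hK (tw_FK _ _ _ (tw_kF _ _ _ (tw_Xk _ _ _ i h1 h)))
    · exact fun i => hK (tw_FK _ _ _ (Subfield.subset_closure (Or.inr ⟨i, rfl⟩)))
  have hx' := hle hx
  rw [Subfield.mem_closure_iff] at hx'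
  obtain ⟨p, hp, q, hq, rfl⟩ := hx'
  obtain ⟨f, hf, rfl⟩ := tg_closure_poly (Kfld k0 r n).toSubring _ hp
  obtain ⟨g, hg, rfl⟩ := tg_closure_poly (Kfld k0 r n).toSubring _ hq
  exact ⟨f, g, hf, hg, rfl⟩

/-- `V_n` as a subring -/
noncomputable abbrev twV (n : ℕ) : Subring (Amb k0 r) :=
  tgV (Ffld k0 r n) (ambY k0 r) (tw_trY k0 r n)

/-- `A_n` as a subring -/
noncomputable abbrev twA (n : ℕ) : Subring (Amb k0 r) :=
  tgA (kfld k0 r n) (Ffld k0 r n) (tw_kF k0 r n) (ambY k0 r) (tw_trY k0 r n)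

theorem tw_mem_M (n : ℕ) (x : Amb k0 r) :
    x ∈ Mset k0 r n ↔ ∃ v ∈ twV k0 r n, x = ambY k0 r * v := by
  constructor
  · rintro ⟨v, hv, rfl⟩
    exact ⟨v, (tgV_iff (tw_trY k0 r n) v).1 hv, rfl⟩
  · rintro ⟨v, hv, rfl⟩
    exact ⟨v, (tgV_iff (tw_trY k0 r n) v).2 hv, rfl⟩

theorem tw_mem_A (n : ℕ) (x : Amb k0 r) : x ∈ Aset k0 r n ↔ x ∈ twA k0 r n := by
  constructor
  · rintro ⟨c, hc, m, hm, rfl⟩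
    obtain ⟨v, hv, rfl⟩ := (tw_mem_M k0 r n m).1 hm
    exact ⟨c, hc, v, hv, rfl⟩
  · rintro ⟨c, hc, v, hv, rfl⟩
    exact ⟨c, hc, _, (tw_mem_M k0 r n _).2 ⟨v, hv, rfl⟩, rfl⟩

theorem tw_yV (n : ℕ) {v : Amb k0 r} (hv : v ∈ twV k0 r n) : ambY k0 r * v ∈ twA k0 r n :=
  ⟨0, zero_mem _, v, hv, by simp⟩

theorem tw_YA (n : ℕ) : ambY k0 r ∈ twA k0 r n :=
  ⟨0, zero_mem _, 1, one_mem _, by simp⟩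

theorem tw_PK (n : ℕ) {x : Amb k0 r} (hx : x ∈ tgP (Ffld k0 r n) (ambY k0 r)) :
    x ∈ Kfld k0 r n := by
  have : tgP (Ffld k0 r n) (ambY k0 r) ≤ (Kfld k0 r n).toSubring := by
    refine Subring.closure_le.2 ?_
    exact Subfield.subset_closure
  exact this hx

theorem tw_AK (n : ℕ) {x : Amb k0 r} (hx : x ∈ twA k0 r n) : x ∈ Kfld k0 r n := by
  obtain ⟨c, hc, v, ⟨f, hf, g, hg, rfl⟩, rfl⟩ := hx
  exact add_mem (tw_FK _ _ _ (tw_kF _ _ _ hc)) (mul_mem (tw_YK k0 r n)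
    (div_mem (tw_PK k0 r n hf) (add_mem (one_mem _) (mul_mem (tw_YK k0 r n) (tw_PK k0 r n hg)))))

/-- Elements of `K_n` fall into `A_n` after multiplying by a power of `Y`. -/
theorem tw_powA (n : ℕ) {x : Amb k0 r} (hx : x ∈ Kfld k0 r n) :
    ∃ m : ℕ, ambY k0 r ^ m * x ∈ twA k0 r n := by
  obtain ⟨m, hm⟩ := tgV_pow (tw_trY k0 r n) hx
  refine ⟨m + 1, ?_⟩
  have := tw_yV k0 r n hm
  rwa [← mul_assoc, ← pow_succ'] at this

theorem tw_D_K : ∀ n : ℕ, Dset k0 r (n + 1) ⊆ (Kfld k0 r (n + 1) : Set (Amb k0 r))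
  | 0 => fun x hx => tw_AK k0 r 1 ((tw_mem_A k0 r 1 x).1 hx)
  | n + 1 => fun x hx => tw_AK k0 r (n + 2) ((tw_mem_A k0 r (n + 2) x).1 hx.2)

theorem tw_nag_eq (S : Set (Amb k0 r)) (T : Amb k0 r) : nagataSet k0 r S T = tgNag S T := rfl

theorem tw_B_sub (n : ℕ) : ∃ N : Subring (Amb k0 r), ∀ x, x ∈ N ↔ x ∈ Bset k0 r (n + 2) := by
  refine ⟨sInf {N | ∃ W ∈ valOverringsIn k0 r (Dset k0 r (n + 1)) (Kfld k0 r (n + 1)),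
    (N : Set (Amb k0 r)) = nagataSet k0 r W (ambX' k0 r (n + 2))}, fun x => ?_⟩
  rw [Subring.mem_sInf]
  change _ ↔ x ∈ krSet k0 r (Dset k0 r (n + 1)) (Kfld k0 r (n + 1)) (ambX' k0 r (n + 2))
  rw [krSet, Set.mem_iInter₂]
  constructor
  · intro h W hW
    have hW' : ∀ a ∈ W, ∀ b ∈ W, a / b ∈ W ∨ b / a ∈ W := by
      intro a ha b hb
      have := hW.2.2 (a / b) (div_mem (hW.2.1 ha) (hW.2.1 hb))
      rwa [inv_div] at this
    exact h (tgNagSub W hW' (ambX' k0 r (n + 2)) (fun p hp hp0 =>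
      tw_trT k0 r (n + 1) p (fun i => hW.2.1 (hp i)) hp0)) ⟨W, hW, rfl⟩
  · rintro h N ⟨W, hW, e⟩
    rw [← SetLike.mem_coe, e]
    exact h W hW

theorem tw_mem_B (n : ℕ) (x : Amb k0 r) : x ∈ Bset k0 r (n + 2) ↔
    ∀ W ∈ valOverringsIn k0 r (Dset k0 r (n + 1)) (Kfld k0 r (n + 1)),
      x ∈ tgNag (W : Set (Amb k0 r)) (ambX' k0 r (n + 2)) := by
  change x ∈ krSet k0 r (Dset k0 r (n + 1)) (Kfld k0 r (n + 1)) (ambX' k0 r (n + 2)) ↔ _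
  rw [krSet, Set.mem_iInter₂]
  rfl

theorem tw_mem_D (n : ℕ) (x : Amb k0 r) :
    x ∈ Dset k0 r (n + 2) ↔ x ∈ Bset k0 r (n + 2) ∧ x ∈ twA k0 r (n + 2) := by
  rw [← tw_mem_A]
  rfl

theorem tw_BK (n : ℕ) {x : Amb k0 r} (hx : x ∈ Bset k0 r (n + 2)) : x ∈ Kfld k0 r (n + 2) := by
  rw [tw_mem_B] at hx
  obtain ⟨f, g, hf, hg, _, rfl⟩ := hx (Kfld k0 r (n + 1)).toSubring
    ⟨tw_D_K k0 r n, fun _ h => h, fun x h => Or.inl h⟩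
  have hm := tw_mono k0 r (n + 1)
  have hT := tw_TK k0 r (n + 1)
  exact div_mem (tg_eval_mem (S := (Kfld k0 r (n + 2)).toSubring) (fun i => hm (hf i)) hT)
    (tg_eval_mem (S := (Kfld k0 r (n + 2)).toSubring) (fun i => hm (hg i)) hT)

/-- The step: powers of `Y` push `K_{n+2}` into `B_{n+2}`. -/
theorem tw_powB (n : ℕ) (hY : ambY k0 r ∈ Dset k0 r (n + 1))
    (hP : ∀ x ∈ Kfld k0 r (n + 1), ∃ m : ℕ, ambY k0 r ^ m * x ∈ Dset k0 r (n + 1))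
    {x : Amb k0 r} (hx : x ∈ Kfld k0 r (n + 2)) :
    ∃ m : ℕ, ambY k0 r ^ m * x ∈ Bset k0 r (n + 2) := by
  obtain ⟨f, g, hf, hg, rfl⟩ := tw_ratT k0 r (n + 1) hx
  by_cases hg0 : g = 0
  · refine ⟨0, ?_⟩
    rw [tw_mem_B]
    intro W _
    simpa [hg0] using tgNag_base W (ambX' k0 r (n + 2)) (zero_mem W)
  obtain ⟨i₀, hi₀⟩ : ∃ i, g.coeff i ≠ 0 := by
    by_contra hc
    push Not at hc
    exact hg0 (Polynomial.ext (by simpa using hc))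
  have hcK : (g.coeff i₀)⁻¹ ∈ Kfld k0 r (n + 1) := inv_mem (hg i₀)
  choose m hm using fun i => hP ((g.coeff i₀)⁻¹ * f.coeff i) (mul_mem hcK (hf i))
  refine ⟨f.support.sup m, ?_⟩
  rw [tw_mem_B]
  intro W hW
  have key := tgNag_frac W (Kfld k0 r (n + 1)) hW.2.2 (ambX' k0 r (n + 2))
    (C (g.coeff i₀)⁻¹ * f) (C (g.coeff i₀)⁻¹ * g)
    (fun i => by rw [coeff_C_mul]; exact mul_mem hcK (hg i)) i₀
    (by rw [coeff_C_mul, inv_mul_cancel₀ hi₀]) (ambY k0 r ^ f.support.sup m) ?_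
  · simp only [eval_mul, eval_C] at key
    rwa [mul_div_mul_left _ _ (inv_ne_zero hi₀)] at key
  · intro i
    rw [coeff_C_mul]
    by_cases hi : f.coeff i = 0
    · rw [hi, mul_zero, mul_zero]
      exact zero_mem W
    · have hle : m i ≤ f.support.sup m := Finset.le_sup (mem_support_iff.2 hi)
      obtain ⟨d, hd⟩ := Nat.exists_eq_add_of_le' hle
      rw [hd, pow_add, mul_assoc]
      exact mul_mem (pow_mem (hW.1 hY) d) (hW.1 (hm i))

theorem tw_YB (n : ℕ) (hY : ambY k0 r ∈ Dset k0 r (n + 1)) : ambY k0 r ∈ Bset k0 r (n + 2) := by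
  rw [tw_mem_B]
  intro W hW
  exact tgNag_base _ _ (hW.1 hY)

theorem tw_P (n : ℕ) : ambY k0 r ∈ Dset k0 r (n + 1) ∧
    ∀ x ∈ Kfld k0 r (n + 1), ∃ m : ℕ, ambY k0 r ^ m * x ∈ Dset k0 r (n + 1) := by
  induction n with
  | zero =>
    refine ⟨(tw_mem_A k0 r 1 _).2 (tw_YA k0 r 1), fun x hx => ?_⟩
    obtain ⟨m, hm⟩ := tw_powA k0 r 1 hx
    exact ⟨m, (tw_mem_A k0 r 1 _).2 hm⟩
  | succ n ih =>
    obtain ⟨hY, hP⟩ := ih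
    have hYB := tw_YB k0 r n hY
    refine ⟨(tw_mem_D k0 r n _).2 ⟨hYB, tw_YA k0 r _⟩, fun x hx => ?_⟩
    obtain ⟨m, hm⟩ := tw_powB k0 r n hY hP hx
    obtain ⟨l, hl⟩ := tw_powA k0 r (n + 2) hx
    obtain ⟨N, hN⟩ := tw_B_sub k0 r n
    refine ⟨m + l, (tw_mem_D k0 r n _).2 ⟨?_, ?_⟩⟩
    · rw [add_comm m l, pow_add, mul_assoc]
      exact (hN _).1 (mul_mem (pow_mem ((hN _).2 hYB) l) ((hN _).2 hm))
    · rw [pow_add, mul_assoc]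
      exact mul_mem (pow_mem (tw_YA k0 r _) m) hl

end TowerSpecific

theorem tower_D_adjoin_and_localization
    (k0 : Type) [Field k0] (r : ℕ) (hr : 2 ≤ r) (n : ℕ) (hn : 2 ≤ n) :
    -- `Dₙ[X′ₙ] = Bₙ`
    {x : Amb k0 r | ∃ f : Polynomial (Amb k0 r),
        (∀ i, f.coeff i ∈ Dset k0 r n) ∧ x = f.eval (ambX' k0 r n)} = Bset k0 r n ∧
    -- `1/X′ₙ ∈ Dₙ` and `Y·X′ₙ ∈ Dₙ`
    (ambX' k0 r n)⁻¹ ∈ Dset k0 r n ∧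
    ambY k0 r * ambX' k0 r n ∈ Dset k0 r n ∧
    -- `(Dₙ)_{𝓜ₙ} = Dₙ[1/(Y·X′ₙ)]`
    locAt k0 r (Dset k0 r n) (MMset k0 r n) =
      {x : Amb k0 r | ∃ f : Polynomial (Amb k0 r),
        (∀ i, f.coeff i ∈ Dset k0 r n) ∧ x = f.eval ((ambY k0 r * ambX' k0 r n)⁻¹)} ∧
    -- `(Dₙ)_{𝓜ₙ} = Aₙ`
    locAt k0 r (Dset k0 r n) (MMset k0 r n) = Aset k0 r n := by
  obtain ⟨j, rfl⟩ := Nat.exists_eq_add_of_le' hn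
  obtain ⟨N, hN⟩ := tw_B_sub k0 r j
  obtain ⟨hYD, hP⟩ := tw_P k0 r j
  have hY0 := tw_Y0 k0 r
  have hYB : ambY k0 r ∈ N := (hN _).2 (tw_YB k0 r j hYD)
  have hYA := tw_YA k0 r (j + 2)
  have hD : ∀ x, x ∈ Dset k0 r (j + 2) ↔ x ∈ N ∧ x ∈ twA k0 r (j + 2) := fun x => by
    rw [tw_mem_D, hN]
  have hTB : ambX' k0 r (j + 2) ∈ N := (hN _).2 ((tw_mem_B k0 r j _).2 fun W _ => tgNag_T W _)
  have hTiB : (ambX' k0 r (j + 2))⁻¹ ∈ N :=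
    (hN _).2 ((tw_mem_B k0 r j _).2 fun W _ => tgNag_Tinv W _)
  set T := ambX' k0 r (j + 2) with hTdef
  set Y := ambY k0 r with hYdef
  have hXk : ambX k0 r (j + 2) ∈ kfld k0 r (j + 2) := tw_Xk _ _ _ _ (by omega) le_rfl
  have hXV : ambX k0 r (j + 2) ∈ twV k0 r (j + 2) := tgV_P _ (tgP_E (tw_kF _ _ _ hXk))
  have hYT : Y * T = 1 + Y * ambX k0 r (j + 2) := by
    rw [hTdef, tw_X'_eq, ← hYdef, mul_add, mul_inv_cancel₀ hY0]
  have hu : Y * T ≠ 0 ∧ (Y * T)⁻¹ ∈ twV k0 r (j + 2) := by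
    rw [hYT]
    exact tgV_inv (tw_trY k0 r (j + 2)) (one_mem _) one_ne_zero hXV
  have hYTA : Y * T ∈ twA k0 r (j + 2) := ⟨1, one_mem _, _, hXV, hYT⟩
  have hYTiA : (Y * T)⁻¹ ∈ twA k0 r (j + 2) := by
    rw [hYT]
    exact tgA_inv (tw_kF k0 r (j + 2)) (tw_trY k0 r (j + 2)) (one_mem _) one_ne_zero hXV
  have hYTD : Y * T ∈ Dset k0 r (j + 2) := (hD _).2 ⟨mul_mem hYB hTB, hYTA⟩
  have hT0 : T ≠ 0 := right_ne_zero_of_mul hu.1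
  have hTi : T⁻¹ = Y * (Y * T)⁻¹ := by
    field_simp
  have hTiA : T⁻¹ ∈ twA k0 r (j + 2) := by
    rw [hTi]
    exact mul_mem hYA hYTiA
  have h0D : (0 : Amb k0 r) ∈ Dset k0 r (j + 2) := (hD _).2 ⟨zero_mem _, zero_mem _⟩
  have hmono : ∀ (d : Amb k0 r) (m : ℕ), d ∈ Dset k0 r (j + 2) →
      ∀ i, (Polynomial.C d * Polynomial.X ^ m).coeff i ∈ Dset k0 r (j + 2) := by
    intro d m hd i
    rw [Polynomial.coeff_C_mul_X_pow]
    split_ifs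
    · exact hd
    · exact h0D
  -- every element of `A` is `d / (Y T)^m`
  have hA : ∀ a ∈ twA k0 r (j + 2), ∃ m : ℕ, (Y * T) ^ m * a ∈ Dset k0 r (j + 2) := by
    intro a ha
    obtain ⟨m, hm⟩ := tw_powB k0 r j hYD hP (tw_AK k0 r (j + 2) ha)
    refine ⟨m, (hD _).2 ⟨?_, mul_mem (pow_mem hYTA m) ha⟩⟩
    rw [mul_pow, mul_comm (Y ^ m), mul_assoc]
    exact mul_mem (pow_mem hTB m) ((hN _).2 hm)
  have hsetA : {x : Amb k0 r | ∃ f : Polynomial (Amb k0 r),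
        (∀ i, f.coeff i ∈ Dset k0 r (j + 2)) ∧ x = f.eval ((Y * T)⁻¹)} = Aset k0 r (j + 2) := by
    ext x
    rw [tw_mem_A]
    constructor
    · rintro ⟨f, hf, rfl⟩
      exact tg_eval_mem (fun i => ((hD _).1 (hf i)).2) hYTiA
    · intro hx
      obtain ⟨m, hm⟩ := hA x hx
      refine ⟨_, hmono _ m hm, ?_⟩
      simp only [Polynomial.eval_mul, Polynomial.eval_C, Polynomial.eval_pow, Polynomial.eval_X]
      rw [mul_right_comm, ← mul_pow, mul_inv_cancel₀ hu.1, one_pow, one_mul]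
  have hlocA : locAt k0 r (Dset k0 r (j + 2)) (MMset k0 r (j + 2)) = Aset k0 r (j + 2) := by
    ext x
    rw [tw_mem_A]
    constructor
    · rintro ⟨a, ha, b, hb, hbm, rfl⟩
      obtain ⟨c, hc, v, hv, e⟩ := ((hD _).1 hb).2
      have hc0 : c ≠ 0 := by
        rintro rfl
        exact hbm ⟨(tw_mem_M k0 r (j + 2) b).2 ⟨v, hv, by rw [e, zero_add]⟩, hb⟩
      rw [div_eq_mul_inv]
      refine mul_mem ((hD _).1 ha).2 ?_
      rw [e]
      exact tgA_inv (tw_kF k0 r (j + 2)) (tw_trY k0 r (j + 2)) hc hc0 hv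
    · intro hx
      obtain ⟨m, hm⟩ := hA x hx
      refine ⟨_, hm, (Y * T) ^ m, (hD _).2 ⟨pow_mem (mul_mem hYB hTB) m, pow_mem hYTA m⟩, ?_, ?_⟩
      · rintro ⟨h, -⟩
        obtain ⟨v, hv, e⟩ := (tw_mem_M k0 r (j + 2) _).1 h
        have h1 : (1 : Amb k0 r) + Y * (-(v * (Y * T)⁻¹ ^ m)) = 0 := by
          have : Y * (v * (Y * T)⁻¹ ^ m) = 1 := by
            rw [← mul_assoc, ← e, ← mul_pow, mul_inv_cancel₀ hu.1, one_pow]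
          rw [mul_neg, this, add_neg_cancel]
        exact one_ne_zero (tgV_one (tw_trY k0 r (j + 2)) (one_mem _)
          (neg_mem (mul_mem hv (pow_mem hu.2 m))) h1)
      · rw [mul_div_cancel_left₀ _ (pow_ne_zero m hu.1)]
  refine ⟨?_, (hD _).2 ⟨hTiB, hTiA⟩, hYTD, hlocA.trans hsetA.symm, hlocA⟩
  ext x
  rw [← hN]
  constructor
  · rintro ⟨f, hf, rfl⟩
    exact tg_eval_mem (fun i => ((hD _).1 (hf i)).1) hTB
  · intro hx
    obtain ⟨m, hm⟩ := tw_powA k0 r (j + 2) (tw_BK k0 r j ((hN x).1 hx))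
    have hd : x * T⁻¹ ^ m ∈ Dset k0 r (j + 2) := by
      refine (hD _).2 ⟨mul_mem hx (pow_mem hTiB m), ?_⟩
      rw [hTi, mul_pow, ← mul_assoc, mul_comm x]
      exact mul_mem hm (pow_mem hYTiA m)
    refine ⟨_, hmono _ m hd, ?_⟩
    simp only [Polynomial.eval_mul, Polynomial.eval_C, Polynomial.eval_pow, Polynomial.eval_X]
    rw [mul_assoc, ← mul_pow, inv_mul_cancel₀ hT0, one_pow, mul_one]
end

section
/- In the tower construction, for every n ≥ 2, 𝓜ₙ := Mₙ ∩ Dₙ is a height-one maximal ideal of Dₙ, and 𝓜ₙ ∩ K_{n−1} = 𝓜_{n−1} (where 𝓜₁ is understood as M₁ ∩ D₁ = M₁). -/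
namespace TW
open Polynomial
variable {E : Type*} [Field E]

/-- all coefficients lie in `S` -/
def CIn (S : Set E) (p : E[X]) : Prop := ∀ i, p.coeff i ∈ S

/-- `T` is transcendental over `L` -/
def TrOver (L : Set E) (T : E) : Prop := ∀ p : E[X], CIn L p → p.eval T = 0 → p = 0

theorem CIn.mono {S S' : Set E} (h : S ⊆ S') {p : E[X]} (hp : CIn S p) : CIn S' p :=
  fun i => h (hp i)
theorem TrOver.mono {S S' : Set E} (h : S ⊆ S') {T : E} (hp : TrOver S' T) : TrOver S T :=
  fun p h1 => hp p (h1.mono h)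

section ring
variable {R : Subring E} {p q : E[X]}
theorem CIn.add (hp : CIn (R : Set E) p) (hq : CIn (R : Set E) q) : CIn (R : Set E) (p + q) :=
  fun i => by rw [coeff_add]; exact R.add_mem (hp i) (hq i)
theorem CIn.neg (hp : CIn (R : Set E) p) : CIn (R : Set E) (-p) :=
  fun i => by rw [coeff_neg]; exact R.neg_mem (hp i)
theorem CIn.sub (hp : CIn (R : Set E) p) (hq : CIn (R : Set E) q) : CIn (R : Set E) (p - q) :=
  fun i => by rw [coeff_sub]; exact R.sub_mem (hp i) (hq i)
theorem CIn.mul (hp : CIn (R : Set E) p) (hq : CIn (R : Set E) q) : CIn (R : Set E) (p * q) :=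
  fun i => by
    rw [coeff_mul]; exact R.sum_mem fun c _ => R.mul_mem (hp _) (hq _)
theorem CIn.C {a : E} (ha : a ∈ R) : CIn (R : Set E) (C a) :=
  fun i => by
    rw [coeff_C]; split_ifs
    · exact ha
    · exact R.zero_mem
theorem CIn.X : CIn (R : Set E) X :=
  fun i => by
    rw [coeff_X]; split_ifs
    · exact R.one_mem
    · exact R.zero_mem
theorem CIn.one : CIn (R : Set E) 1 := by
  simpa using CIn.C (R := R) R.one_mem
theorem CIn.zero : CIn (R : Set E) 0 := by
  simpa using CIn.C (R := R) R.zero_mem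
theorem CIn.Xpow (n : ℕ) : CIn (R : Set E) (Polynomial.X ^ n) := by
  induction n with
  | zero => simpa using CIn.one
  | succ k ih => rw [pow_succ]; exact ih.mul CIn.X
end ring

variable {L : Subfield E} {T : E}

theorem K_rep {x : E} (hx : x ∈ Subfield.closure ((L : Set E) ∪ {T})) :
    ∃ f g : E[X], CIn (L : Set E) f ∧ CIn (L : Set E) g ∧ g.eval T ≠ 0 ∧ x = f.eval T / g.eval T := by
  induction hx using Subfield.closure_induction with
  | mem x hx =>
    rcases hx with hx | hx
    · exact ⟨C x, 1, CIn.C (R := L.toSubring) hx, CIn.one (R := L.toSubring), by simp, by simp⟩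
    · exact ⟨X, 1, CIn.X (R := L.toSubring), CIn.one (R := L.toSubring), by simp, by simpa using hx⟩
  | one => exact ⟨1, 1, CIn.one (R := L.toSubring), CIn.one (R := L.toSubring), by simp, by simp⟩
  | add x y hx hy h1 h2 =>
    obtain ⟨f, g, hf, hg, h0, rfl⟩ := h1
    obtain ⟨f', g', hf', hg', h0', rfl⟩ := h2
    refine ⟨f * g' + g * f', g * g', CIn.add (R := L.toSubring) (CIn.mul (R := L.toSubring) hf hg')
      (CIn.mul (R := L.toSubring) hg hf'), CIn.mul (R := L.toSubring) hg hg', ?_, ?_⟩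
    · rw [eval_mul]; exact mul_ne_zero h0 h0'
    · rw [div_add_div _ _ h0 h0']; simp
  | neg x hx h1 =>
    obtain ⟨f, g, hf, hg, h0, rfl⟩ := h1
    exact ⟨-f, g, CIn.neg (R := L.toSubring) hf, hg, h0, by simp [neg_div]⟩
  | inv x hx h1 =>
    obtain ⟨f, g, hf, hg, h0, rfl⟩ := h1
    by_cases hf0 : f.eval T = 0
    · exact ⟨0, 1, CIn.zero (R := L.toSubring), CIn.one (R := L.toSubring), by simp, by simp [hf0]⟩
    · exact ⟨g, f, hg, hf, hf0, by simp⟩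
  | mul x y hx hy h1 h2 =>
    obtain ⟨f, g, hf, hg, h0, rfl⟩ := h1
    obtain ⟨f', g', hf', hg', h0', rfl⟩ := h2
    refine ⟨f * f', g * g', CIn.mul (R := L.toSubring) hf hf', CIn.mul (R := L.toSubring) hg hg', ?_, ?_⟩
    · rw [eval_mul]; exact mul_ne_zero h0 h0'
    · rw [div_mul_div_comm]; simp

theorem eval_mem_sub {R : Subring E} {f : E[X]} (hf : CIn (R : Set E) f) {t : E} (ht : t ∈ R) : f.eval t ∈ R := by
  rw [eval_eq_sum_range]
  exact R.sum_mem fun i _ => R.mul_mem (hf i) (R.pow_mem ht _)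

theorem polyRep {x : E} : x ∈ Subring.closure ((L : Set E) ∪ {T}) ↔
    ∃ f : E[X], CIn (L : Set E) f ∧ x = f.eval T := by
  constructor
  · intro hx
    induction hx using Subring.closure_induction with
    | mem x hx =>
      rcases hx with hx | hx
      · exact ⟨C x, CIn.C (R := L.toSubring) hx, by simp⟩
      · exact ⟨X, CIn.X (R := L.toSubring), by simpa using hx⟩
    | zero => exact ⟨0, CIn.zero (R := L.toSubring), by simp⟩
    | one => exact ⟨1, CIn.one (R := L.toSubring), by simp⟩
    | add x y hx hy h1 h2 =>
      obtain ⟨f, hf, rfl⟩ := h1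
      obtain ⟨f', hf', rfl⟩ := h2
      exact ⟨f + f', CIn.add (R := L.toSubring) hf hf', by simp⟩
    | neg x hx h1 =>
      obtain ⟨f, hf, rfl⟩ := h1
      exact ⟨-f, CIn.neg (R := L.toSubring) hf, by simp⟩
    | mul x y hx hy h1 h2 =>
      obtain ⟨f, hf, rfl⟩ := h1
      obtain ⟨f', hf', rfl⟩ := h2
      exact ⟨f * f', CIn.mul (R := L.toSubring) hf hf', by simp⟩
  · rintro ⟨f, hf, rfl⟩
    refine eval_mem_sub (fun i => ?_) ?_
    · exact Subring.subset_closure (Or.inl (hf i))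
    · exact Subring.subset_closure (Or.inr rfl)

theorem shift_rep {f : E[X]} (hf : CIn (L : Set E) f) (h0 : f ≠ 0) :
    ∃ (a : ℕ) (f' : E[X]), CIn (L : Set E) f' ∧ f'.coeff 0 ≠ 0 ∧ f = X ^ a * f' := by
  obtain ⟨q, hq, hnd⟩ := exists_eq_pow_rootMultiplicity_mul_and_not_dvd f h0 0
  simp only [map_zero, sub_zero] at hq hnd
  generalize rootMultiplicity 0 f = a at hq
  refine ⟨a, q, fun i => ?_, fun h => hnd (X_dvd_iff.2 h), hq⟩
  have := hf (i + a)
  rwa [hq, mul_comm, coeff_mul_X_pow] at this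

/-! ### The `Y`-adic valuation -/

def VS (F : Subfield E) (Y : E) : Set E :=
  {x | ∃ f g : E[X], CIn (F : Set E) f ∧ CIn (F : Set E) g ∧ g.coeff 0 ≠ 0 ∧ x = f.eval Y / g.eval Y}
def MS (F : Subfield E) (Y : E) : Set E :=
  {x | ∃ f g : E[X], CIn (F : Set E) f ∧ CIn (F : Set E) g ∧ f.coeff 0 = 0 ∧ g.coeff 0 ≠ 0 ∧
    x = f.eval Y / g.eval Y}

variable {F : Subfield E} {Y : E}

theorem ev_ne (h : TrOver (F : Set E) Y) {g : E[X]} (hg : CIn (F : Set E) g) (h0 : g.coeff 0 ≠ 0) :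
    g.eval Y ≠ 0 := fun h1 => h0 (by rw [h g hg h1]; simp)

theorem F_V {x : E} (hx : x ∈ F) : x ∈ VS F Y :=
  ⟨C x, 1, CIn.C (R := F.toSubring) hx, CIn.one (R := F.toSubring), by simp, by simp⟩

theorem M_V {x : E} (hx : x ∈ MS F Y) : x ∈ VS F Y := by
  obtain ⟨f, g, a, b, c, d, e⟩ := hx
  exact ⟨f, g, a, b, d, e⟩

theorem Y_M : Y ∈ MS F Y :=
  ⟨X, 1, CIn.X (R := F.toSubring), CIn.one (R := F.toSubring), by simp, by simp, by simp⟩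

theorem V_add (h : TrOver (F : Set E) Y) {x y : E} (hx : x ∈ VS F Y) (hy : y ∈ VS F Y) : x + y ∈ VS F Y := by
  obtain ⟨f, g, hf, hg, h0, rfl⟩ := hx
  obtain ⟨f', g', hf', hg', h0', rfl⟩ := hy
  refine ⟨f * g' + g * f', g * g', CIn.add (R := F.toSubring) (CIn.mul (R := F.toSubring) hf hg')
      (CIn.mul (R := F.toSubring) hg hf'), CIn.mul (R := F.toSubring) hg hg', ?_, ?_⟩
  · rw [mul_coeff_zero]; exact mul_ne_zero h0 h0'
  · rw [div_add_div _ _ (ev_ne h hg h0) (ev_ne h hg' h0')]; simp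

theorem M_add (h : TrOver (F : Set E) Y) {x y : E} (hx : x ∈ MS F Y) (hy : y ∈ MS F Y) : x + y ∈ MS F Y := by
  obtain ⟨f, g, hf, hg, h1, h0, rfl⟩ := hx
  obtain ⟨f', g', hf', hg', h1', h0', rfl⟩ := hy
  refine ⟨f * g' + g * f', g * g', CIn.add (R := F.toSubring) (CIn.mul (R := F.toSubring) hf hg')
      (CIn.mul (R := F.toSubring) hg hf'), CIn.mul (R := F.toSubring) hg hg', ?_, ?_, ?_⟩
  · simp [mul_coeff_zero, h1, h1']
  · rw [mul_coeff_zero]; exact mul_ne_zero h0 h0'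
  · rw [div_add_div _ _ (ev_ne h hg h0) (ev_ne h hg' h0')]; simp

theorem V_mul {x y : E} (hx : x ∈ VS F Y) (hy : y ∈ VS F Y) : x * y ∈ VS F Y := by
  obtain ⟨f, g, hf, hg, h0, rfl⟩ := hx
  obtain ⟨f', g', hf', hg', h0', rfl⟩ := hy
  refine ⟨f * f', g * g', CIn.mul (R := F.toSubring) hf hf', CIn.mul (R := F.toSubring) hg hg', ?_, ?_⟩
  · rw [mul_coeff_zero]; exact mul_ne_zero h0 h0'
  · rw [div_mul_div_comm]; simp

theorem M_mul {x y : E} (hx : x ∈ MS F Y) (hy : y ∈ VS F Y) : x * y ∈ MS F Y := by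
  obtain ⟨f, g, hf, hg, h1, h0, rfl⟩ := hx
  obtain ⟨f', g', hf', hg', h0', rfl⟩ := hy
  refine ⟨f * f', g * g', CIn.mul (R := F.toSubring) hf hf', CIn.mul (R := F.toSubring) hg hg', ?_, ?_, ?_⟩
  · simp [mul_coeff_zero, h1]
  · rw [mul_coeff_zero]; exact mul_ne_zero h0 h0'
  · rw [div_mul_div_comm]; simp

theorem V_neg {x : E} (hx : x ∈ VS F Y) : -x ∈ VS F Y := by
  rw [← neg_one_mul]; exact V_mul (F_V (F.neg_mem F.one_mem)) hx
theorem M_neg {x : E} (hx : x ∈ MS F Y) : -x ∈ MS F Y := by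
  rw [← mul_neg_one]; exact M_mul hx (F_V (F.neg_mem F.one_mem))
theorem M_sub (h : TrOver (F : Set E) Y) {x y : E} (hx : x ∈ MS F Y) (hy : y ∈ MS F Y) : x - y ∈ MS F Y := by
  rw [sub_eq_add_neg]; exact M_add h hx (M_neg hy)
theorem M_zero : (0 : E) ∈ MS F Y := by
  simpa using M_mul (Y_M (F := F) (Y := Y)) (F_V F.zero_mem)
theorem V_pow {x : E} (hx : x ∈ VS F Y) (n : ℕ) : x ^ n ∈ VS F Y := by
  induction n with
  | zero => simpa using F_V F.one_mem
  | succ k ih => rw [pow_succ]; exact V_mul ih hx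

theorem M_F (h : TrOver (F : Set E) Y) {c : E} (hc : c ∈ F) (hm : c ∈ MS F Y) : c = 0 := by
  obtain ⟨f, g, hf, hg, h1, h0, e⟩ := hm
  have hne := ev_ne h hg h0
  have : f - C c * g = 0 := h _ (CIn.sub (R := F.toSubring) hf
    (CIn.mul (R := F.toSubring) (CIn.C (R := F.toSubring) hc) hg)) (by
      simp only [eval_sub, eval_mul, eval_C]; rw [e]; field_simp; ring)
  have h2 := congrArg (fun p => coeff p 0) this
  simp only [coeff_sub, coeff_C_mul, h1, coeff_zero, zero_sub, neg_eq_zero, mul_eq_zero, h0, or_false] at h2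
  exact h2

theorem one_not_M (h : TrOver (F : Set E) Y) : (1 : E) ∉ MS F Y :=
  fun h1 => one_ne_zero (M_F h F.one_mem h1)

theorem V_res (h : TrOver (F : Set E) Y) {x : E} (hx : x ∈ VS F Y) : ∃ c ∈ F, x - c ∈ MS F Y := by
  obtain ⟨f, g, hf, hg, h0, rfl⟩ := hx
  have hc : f.coeff 0 / g.coeff 0 ∈ F := F.div_mem (hf 0) (hg 0)
  refine ⟨f.coeff 0 / g.coeff 0, hc, f - C (f.coeff 0 / g.coeff 0) * g, g, 
    CIn.sub (R := F.toSubring) hf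
    (CIn.mul (R := F.toSubring) (CIn.C (R := F.toSubring) hc) hg), hg, ?_, h0, ?_⟩
  · simp [coeff_C_mul, h0]
  · have hne := ev_ne h hg h0
    simp only [eval_sub, eval_mul, eval_C]
    field_simp

theorem TrOver.ne_zero (h : TrOver (F : Set E) Y) : Y ≠ 0 := by
  intro h0
  have := h X (CIn.X (R := F.toSubring)) (by simpa using h0)
  exact X_ne_zero this

theorem K_form (h : TrOver (F : Set E) Y) {x : E} (hx : x ∈ Subfield.closure ((F : Set E) ∪ {Y})) (hx0 : x ≠ 0) :
    ∃ (a b : ℕ) (f g : E[X]), CIn (F : Set E) f ∧ CIn (F : Set E) g ∧ f.coeff 0 ≠ 0 ∧ g.coeff 0 ≠ 0 ∧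
      x * (Y ^ b * g.eval Y) = Y ^ a * f.eval Y := by
  obtain ⟨f, g, hf, hg, h0, rfl⟩ := K_rep hx
  have hg0 : g ≠ 0 := by rintro rfl; simp at h0
  have hf0 : f ≠ 0 := by rintro rfl; simp at hx0
  obtain ⟨a, f', hf', hf0', rfl⟩ := shift_rep hf hf0
  obtain ⟨b, g', hg', hg0', rfl⟩ := shift_rep hg hg0
  refine ⟨a, b, f', g', hf', hg', hf0', hg0', ?_⟩
  have := h.ne_zero
  have := ev_ne h hg' hg0'
  simp only [eval_mul, eval_pow, eval_X]
  field_simp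

theorem V_val (h : TrOver (F : Set E) Y) {x : E} (hx : x ∈ Subfield.closure ((F : Set E) ∪ {Y})) :
    x ∈ VS F Y ∨ x⁻¹ ∈ MS F Y := by
  by_cases hx0 : x = 0
  · exact Or.inl (hx0 ▸ F_V F.zero_mem)
  obtain ⟨a, b, f, g, hf, hg, hf0, hg0, e⟩ := K_form h hx hx0
  have hY := h.ne_zero
  have hgn := ev_ne h hg hg0
  have hfn := ev_ne h hf hf0
  rcases le_or_gt b a with hab | hab
  · left
    obtain ⟨d, rfl⟩ := Nat.exists_eq_add_of_le hab
    refine ⟨X ^ d * f, g, CIn.mul (R := F.toSubring) (CIn.Xpow d) hf, hg, hg0, ?_⟩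
    rw [eq_div_iff hgn]
    apply mul_left_cancel₀ (pow_ne_zero b hY)
    simp only [eval_mul, eval_pow, eval_X]
    rw [pow_add] at e
    linear_combination e
  · right
    obtain ⟨d, rfl⟩ := Nat.exists_eq_add_of_lt hab
    refine ⟨X ^ (d + 1) * g, f, CIn.mul (R := F.toSubring) (CIn.Xpow _) hg, hf, ?_, hf0, ?_⟩
    · simp [mul_coeff_zero]
    rw [eq_div_iff hfn]
    apply mul_left_cancel₀ (pow_ne_zero a hY)
    apply mul_left_cancel₀ hx0
    simp only [eval_mul, eval_pow, eval_X]
    have : x * (Y ^ a * (x⁻¹ * eval Y f)) = Y ^ a * eval Y f := by field_simp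
    rw [this, ← e]; ring

theorem M_pow (h : TrOver (F : Set E) Y) {m q : E} (hm : m ∈ MS F Y)
    (hq : q ∈ Subfield.closure ((F : Set E) ∪ {Y})) (hq0 : q ≠ 0) :
    ∃ N, ∀ n ≥ N, m ^ n * q ∈ MS F Y := by
  obtain ⟨a, b, f, g, hf, hg, hf0, hg0, e⟩ := K_form h hq hq0
  have hY := h.ne_zero
  have hgn := ev_ne h hg hg0
  have h1 : Y ^ b * q ∈ VS F Y := by
    refine ⟨X ^ a * f, g, CIn.mul (R := F.toSubring) (CIn.Xpow a) hf, hg, hg0, ?_⟩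
    rw [eq_div_iff hgn]
    simp only [eval_mul, eval_pow, eval_X]
    linear_combination e
  obtain ⟨f', g', hf', hg', h1', h0', rfl⟩ := hm
  have hv : eval Y f' / eval Y g' = Y * (eval Y f'.divX / eval Y g') := by
    conv_lhs => rw [← divX_mul_X_add f', h1']
    simp; ring
  have hvm : eval Y f'.divX / eval Y g' ∈ VS F Y :=
    ⟨_, _, fun i => by rw [coeff_divX]; exact hf' _, hg', h0', rfl⟩
  refine ⟨b + 1, fun n hn => ?_⟩
  obtain ⟨d, rfl⟩ := Nat.exists_eq_add_of_le hn
  rw [hv]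
  set v := eval Y f'.divX / eval Y g'
  have : (Y * v) ^ (b + 1 + d) * q = Y * (Y ^ d * (v ^ (b + 1 + d) * (Y ^ b * q))) := by ring
  rw [this]
  exact M_mul Y_M (V_mul (V_pow (M_V Y_M) _) (V_mul (V_pow hvm _) h1))

theorem V_K {x : E} (hx : x ∈ VS F Y) : x ∈ Subfield.closure ((F : Set E) ∪ {Y}) := by
  obtain ⟨f, g, hf, hg, -, rfl⟩ := hx
  have hle : ∀ c ∈ F, c ∈ Subfield.closure ((F : Set E) ∪ {Y}) := fun c hc =>
    Subfield.subset_closure (Or.inl hc)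
  have hY : Y ∈ Subfield.closure ((F : Set E) ∪ {Y}) := Subfield.subset_closure (Or.inr rfl)
  exact Subfield.div_mem _ 
    (eval_mem_sub (R := (Subfield.closure ((F : Set E) ∪ {Y})).toSubring) (fun i => hle _ (hf i)) hY)
    (eval_mem_sub (R := (Subfield.closure ((F : Set E) ∪ {Y})).toSubring) (fun i => hle _ (hg i)) hY)

theorem VS_mono {F' : Subfield E} (hF : F ≤ F') {x : E} (hx : x ∈ VS F Y) : x ∈ VS F' Y := by
  obtain ⟨f, g, a, b, c, d⟩ := hx
  exact ⟨f, g, a.mono hF, b.mono hF, c, d⟩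
theorem MS_mono {F' : Subfield E} (hF : F ≤ F') {x : E} (hx : x ∈ MS F Y) : x ∈ MS F' Y := by
  obtain ⟨f, g, a, b, c, d⟩ := hx
  exact ⟨f, g, a.mono hF, b.mono hF, c, d⟩

theorem MS_inter {F' : Subfield E} (hF : F ≤ F') (h : TrOver (F' : Set E) Y) {x : E} (hx : x ∈ MS F' Y)
    (hK : x ∈ Subfield.closure ((F : Set E) ∪ {Y})) : x ∈ MS F Y := by
  by_cases hx0 : x = 0
  · exact hx0 ▸ M_zero
  rcases V_val (h.mono hF) (Subfield.inv_mem _ hK) with h1 | h1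
  · exfalso
    have := M_mul hx (VS_mono hF h1)
    rw [mul_inv_cancel₀ hx0] at this
    exact one_not_M h this
  · simpa using h1

/-- the set `k + M` with `k` any set. -/
def AS (k : Set E) (F : Subfield E) (Y : E) : Set E := {x | ∃ c ∈ k, ∃ m ∈ MS F Y, x = c + m}

/-- composite valuation ring -/
def compRing (O : Subring E) (hO : O ≤ F.toSubring) (h : TrOver (F : Set E) Y) : Subring E where
  carrier := AS O F Y
  mul_mem' := by
    rintro _ _ ⟨c, hc, m, hm, rfl⟩ ⟨c', hc', m', hm', rfl⟩
    refine ⟨c * c', O.mul_mem hc hc', m * (c' + m') + m' * c, ?_, by ring⟩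
    exact M_add h (M_mul hm (V_add h (F_V (hO hc')) (M_V hm'))) (M_mul hm' (F_V (hO hc)))
  one_mem' := ⟨1, O.one_mem, 0, M_zero, by simp⟩
  add_mem' := by
    rintro _ _ ⟨c, hc, m, hm, rfl⟩ ⟨c', hc', m', hm', rfl⟩
    exact ⟨c + c', O.add_mem hc hc', m + m', M_add h hm hm', by ring⟩
  zero_mem' := ⟨0, O.zero_mem, 0, M_zero, by simp⟩
  neg_mem' := by
    rintro _ ⟨c, hc, m, hm, rfl⟩
    exact ⟨-c, O.neg_mem hc, -m, M_neg hm, by ring⟩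

theorem AS_V (h : TrOver (F : Set E) Y) {k : Set E} (hk : k ⊆ F) {x : E} (hx : x ∈ AS k F Y) : x ∈ VS F Y := by
  obtain ⟨c, hc, m, hm, rfl⟩ := hx
  exact V_add h (F_V (hk hc)) (M_V hm)

theorem A_sep (h : TrOver (F : Set E) Y) {k : Subfield E} (hkF : k ≤ F)
    [IsIntegrallyClosedIn k.toSubring E] {x : E} (hK : x ∈ Subfield.closure ((F : Set E) ∪ {Y}))
    (hx : x ∉ AS (k : Set E) F Y) : ∃ W : Subring E, AS (k : Set E) F Y ⊆ W ∧
      (W : Set E) ⊆ Subfield.closure ((F : Set E) ∪ {Y}) ∧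
      (∀ z ∈ Subfield.closure ((F : Set E) ∪ {Y}), z ∈ W ∨ z⁻¹ ∈ W) ∧ x ∉ W := by
  have key : ∃ O : ValuationSubring E, k.toSubring ≤ O.toSubring ∧ ∀ c ∈ F, x - c ∈ MS F Y → c ∉ O := by
    by_cases hV : x ∈ VS F Y
    · obtain ⟨c, hc, hm⟩ := V_res h hV
      have hck : c ∉ k.toSubring := fun hck => hx ⟨c, hck, _, hm, by ring⟩
      obtain ⟨O, h1, h2⟩ := Subring.exists_le_valuationSubring_of_isIntegrallyClosedIn hck
      refine ⟨O, h1, fun c' hc' hm' => ?_⟩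
      have : c = c' := by
        have := M_F h (F.sub_mem hc hc') (by have := M_sub h hm' hm; simpa using this)
        exact sub_eq_zero.1 this
      exact this ▸ h2
    · refine ⟨⊤, fun _ _ => trivial, fun c hc hm => absurd ?_ hV⟩
      have := V_add h (F_V hc) (M_V hm)
      simpa using this
  obtain ⟨O, hkO, hO⟩ := key
  have hle : O.toSubring ⊓ F.toSubring ≤ F.toSubring := inf_le_right
  refine ⟨compRing (O.toSubring ⊓ F.toSubring) hle h, ?_, ?_, ?_, ?_⟩
  · rintro _ ⟨c, hc, m, hm, rfl⟩
    exact ⟨c, ⟨hkO hc, hkF hc⟩, m, hm, rfl⟩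
  · intro z hz
    exact V_K (AS_V h (fun y hy => hy.2) hz)
  · intro z hz
    rcases V_val h hz with hV | hM
    · obtain ⟨c, hc, hm⟩ := V_res h hV
      rcases O.mem_or_inv_mem c with hcO | hcO
      · exact Or.inl ⟨c, ⟨hcO, hc⟩, _, hm, by ring⟩
      · by_cases hzM : z ∈ MS F Y
        · exact Or.inl ⟨0, Subring.zero_mem _, z, hzM, by simp⟩
        · right
          have hc0 : c ≠ 0 := by rintro rfl; exact hzM (by simpa using hm)
          have hz0 : z ≠ 0 := by rintro rfl; exact hzM M_zero
          have hzi : z⁻¹ ∈ VS F Y := by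
            rcases V_val h (Subfield.inv_mem _ hz) with h1 | h1
            · exact h1
            · exact absurd (by simpa using h1) hzM
          refine ⟨c⁻¹, ⟨hcO, F.inv_mem hc⟩, z⁻¹ - c⁻¹, ?_, by ring⟩
          have : z⁻¹ - c⁻¹ = (-(z - c)) * (z⁻¹ * c⁻¹) := by field_simp; ring
          rw [this]
          exact M_mul (M_neg hm) (V_mul hzi (F_V (F.inv_mem hc)))
    · exact Or.inr ⟨0, Subring.zero_mem _, _, hM, by simp⟩
  · rintro ⟨c, hc, m, hm, rfl⟩
    exact hO c hc.2 (by simpa using hm) hc.1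

end TW

namespace TW
open Polynomial
variable {E : Type*} [Field E]

/-! ### Nagata rings of valuation rings -/

def UC (S : Set E) (g : E[X]) : Prop :=
  ∃ (t : Finset ℕ) (u : ℕ → E), (∀ i ∈ t, u i ∈ S) ∧ ∑ i ∈ t, u i * g.coeff i = 1

def NS (S : Set E) (T : E) : Set E :=
  {x | ∃ f g : E[X], (∀ i, f.coeff i ∈ S) ∧ (∀ i, g.coeff i ∈ S) ∧ UC S g ∧
    x = f.eval T / g.eval T}

theorem UC_of_coeff {W : Subring E} {g : E[X]} {i : ℕ} (hi : g.coeff i = 1) : UC (W : Set E) g :=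
  ⟨{i}, fun _ => 1, fun _ _ => W.one_mem, by simp [hi]⟩

theorem UC.ne_zero {S : Set E} {g : E[X]} (h : UC S g) : g ≠ 0 := by
  rintro rfl
  obtain ⟨t, u, -, h⟩ := h
  simp at h

theorem lift_poly {W : Subring E} {g : E[X]} (hg : CIn (W : Set E) g) :
    ∃ q : W[X], q.map W.subtype = g := by
  have : g ∈ lifts W.subtype := by
    rw [lifts_iff_coeff_lifts]
    intro n
    exact ⟨⟨_, hg n⟩, rfl⟩
  exact (mem_lifts g).1 this

theorem UC_iff {W : Subring E} (q : W[X]) : UC (W : Set E) (q.map W.subtype) ↔ q.contentIdeal = ⊤ := by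
  constructor
  · rintro ⟨t, u, hu, h⟩
    rw [Ideal.eq_top_iff_one]
    classical
    have : (1 : W) = ∑ i ∈ t.attach, (⟨u i.1, hu i.1 i.2⟩ : W) * q.coeff i.1 := by
      apply Subtype.ext
      rw [← W.subtype_apply, ← W.subtype_apply, map_sum, map_one, ← h, ← Finset.sum_attach]
      simp
    rw [this]
    exact Ideal.sum_mem _ fun i _ => Ideal.mul_mem_left _ _ (coeff_mem_contentIdeal _ _)
  · intro h
    have h1 : (1 : W) ∈ Ideal.span (Set.range fun i => q.coeff i) := by
      have h2 : (1 : W) ∈ q.contentIdeal := h ▸ trivial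
      rw [contentIdeal_def] at h2
      refine Ideal.span_mono ?_ h2
      intro a ha
      obtain ⟨n, -, hn⟩ := mem_coeffs_iff.1 ha
      exact ⟨n, hn.symm⟩
    obtain ⟨c, hc⟩ := (Finsupp.mem_ideal_span_range_iff_exists_finsupp).1 h1
    refine ⟨c.support, fun i => (c i : E), fun i _ => (c i).2, ?_⟩
    have := congrArg W.subtype hc
    rw [Finsupp.sum, map_sum] at this
    simpa using this

theorem UC.mul {W : Subring E} {f g : E[X]} (hf : CIn (W : Set E) f) (hg : CIn (W : Set E) g)
    (h1 : UC (W : Set E) f) (h2 : UC (W : Set E) g) : UC (W : Set E) (f * g) := by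
  obtain ⟨p, rfl⟩ := lift_poly hf
  obtain ⟨q, rfl⟩ := lift_poly hg
  rw [← Polynomial.map_mul, UC_iff]
  exact contentIdeal_mul_eq_top_of_contentIdeal_eq_top ((UC_iff p).1 h1) ((UC_iff q).1 h2)

variable {L : Subfield E} {T : E} {W : Subring E}

theorem NS_den (hW : (W : Set E) ⊆ L) (hT : TrOver (L : Set E) T) {g : E[X]} (hg : CIn (W : Set E) g)
    (hu : UC (W : Set E) g) : g.eval T ≠ 0 :=
  fun h => hu.ne_zero (hT g (hg.mono hW) h)

def nagRing (hW : (W : Set E) ⊆ L) (hT : TrOver (L : Set E) T) : Subring E where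
  carrier := NS (W : Set E) T
  mul_mem' := by
    rintro _ _ ⟨f, g, hf, hg, hu, rfl⟩ ⟨f', g', hf', hg', hu', rfl⟩
    exact ⟨f * f', g * g', CIn.mul hf hf', CIn.mul hg hg', UC.mul hg hg' hu hu', by
      rw [div_mul_div_comm]; simp⟩
  one_mem' := ⟨1, 1, CIn.one (R := W), CIn.one (R := W), UC_of_coeff (i := 0) (by simp), by simp⟩
  add_mem' := by
    rintro _ _ ⟨f, g, hf, hg, hu, rfl⟩ ⟨f', g', hf', hg', hu', rfl⟩
    exact ⟨f * g' + g * f', g * g', CIn.add (CIn.mul hf hg') (CIn.mul hg hf'), CIn.mul hg hg', UC.mul hg hg' hu hu', by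
      rw [div_add_div _ _ (NS_den hW hT hg hu) (NS_den hW hT hg' hu')]; simp⟩
  zero_mem' := ⟨0, 1, CIn.zero (R := W), CIn.one (R := W), UC_of_coeff (i := 0) (by simp), by simp⟩
  neg_mem' := by
    rintro _ ⟨f, g, hf, hg, hu, rfl⟩
    exact ⟨-f, g, CIn.neg hf, hg, hu, by simp [neg_div]⟩

theorem W_NS {x : E} (hx : x ∈ W) : x ∈ NS (W : Set E) T :=
  ⟨C x, 1, CIn.C hx, CIn.one (R := W), UC_of_coeff (i := 0) (by simp), by simp⟩

theorem NS_K (hW : (W : Set E) ⊆ L) {x : E} (hx : x ∈ NS (W : Set E) T) :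
    x ∈ Subfield.closure ((L : Set E) ∪ {T}) := by
  obtain ⟨f, g, hf, hg, -, rfl⟩ := hx
  have hle : ∀ c ∈ L, c ∈ Subfield.closure ((L : Set E) ∪ {T}) := fun c hc =>
    Subfield.subset_closure (Or.inl hc)
  have hY : T ∈ Subfield.closure ((L : Set E) ∪ {T}) := Subfield.subset_closure (Or.inr rfl)
  exact Subfield.div_mem _
    (eval_mem_sub (R := (Subfield.closure ((L : Set E) ∪ {T})).toSubring) (fun i => hle _ (hW (hf i))) hY)
    (eval_mem_sub (R := (Subfield.closure ((L : Set E) ∪ {T})).toSubring) (fun i => hle _ (hW (hg i))) hY)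

theorem NS_inter (hW : (W : Set E) ⊆ L) (hT : TrOver (L : Set E) T) {x : E} (hx : x ∈ NS (W : Set E) T)
    (hL : x ∈ L) : x ∈ W := by
  obtain ⟨f, g, hf, hg, hu, e⟩ := hx
  have hne := NS_den hW hT hg hu
  have h0 : f - C x * g = 0 := hT _ (CIn.sub (R := L.toSubring) (CIn.mono hW hf)
    (CIn.mul (R := L.toSubring) (CIn.C (R := L.toSubring) hL) (CIn.mono hW hg))) (by
      simp only [eval_sub, eval_mul, eval_C]; rw [e]; field_simp; ring)
  obtain ⟨t, u, hut, h1⟩ := hu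
  have : x = ∑ i ∈ t, u i * f.coeff i := by
    rw [sub_eq_zero.1 h0]
    conv_lhs => rw [← mul_one x, ← h1, Finset.mul_sum]
    refine Finset.sum_congr rfl fun i _ => ?_
    rw [coeff_C_mul]; ring
  rw [this]
  exact W.sum_mem fun i hi => W.mul_mem (hut i hi) (hf i)

theorem max_fin (hv : ∀ x ∈ L, x ∈ W ∨ x⁻¹ ∈ W) (s : Finset E) (hs : ∀ a ∈ s, a ∈ L) (h0 : ∃ a ∈ s, a ≠ 0) :
    ∃ a ∈ s, a ≠ 0 ∧ ∀ b ∈ s, b / a ∈ W := by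
  classical
  induction s using Finset.induction_on with
  | empty => simp at h0
  | insert c s hc ih =>
    by_cases h1 : ∃ a ∈ s, a ≠ 0
    · obtain ⟨a, ha, ha0, hb⟩ := ih (fun a ha => hs a (Finset.mem_insert_of_mem ha)) h1
      rcases hv (c / a) (L.div_mem (hs c (Finset.mem_insert_self _ _)) (hs a (Finset.mem_insert_of_mem ha))) with h | h
      · refine ⟨a, Finset.mem_insert_of_mem ha, ha0, fun b hb' => ?_⟩
        rcases Finset.mem_insert.1 hb' with rfl | hb'
        · exact h
        · exact hb b hb'
      · by_cases hc0 : c = 0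
        · refine ⟨a, Finset.mem_insert_of_mem ha, ha0, fun b hb' => ?_⟩
          rcases Finset.mem_insert.1 hb' with rfl | hb'
          · simp [hc0]
          · exact hb b hb'
        refine ⟨c, Finset.mem_insert_self _ _, hc0, fun b hb' => ?_⟩
        rcases Finset.mem_insert.1 hb' with rfl | hb'
        · simp [hc0]
        · have := W.mul_mem (hb b hb') h
          rwa [inv_div, div_mul_div_cancel₀ ha0] at this
    · push Not at h1
      obtain ⟨a, ha, ha0⟩ := h0
      have hac : a = c := by
        rcases Finset.mem_insert.1 ha with h | h
        · exact h
        · exact absurd (h1 a h) ha0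
      subst hac
      refine ⟨a, ha, ha0, fun b hb => ?_⟩
      rcases Finset.mem_insert.1 hb with rfl | hb
      · simp [ha0]
      · simp [h1 b hb]

theorem max_coeff (hv : ∀ x ∈ L, x ∈ W ∨ x⁻¹ ∈ W) {h : E[X]} (hh : CIn (L : Set E) h) (h0 : h ≠ 0) :
    ∃ i, h.coeff i ≠ 0 ∧ ∀ j, h.coeff j / h.coeff i ∈ W := by
  obtain ⟨a, ha, ha0, hb⟩ := max_fin (L := L) (W := W) hv h.coeffs (fun a ha => by
    obtain ⟨n, -, rfl⟩ := mem_coeffs_iff.1 ha; exact hh n) (by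
    refine ⟨h.leadingCoeff, mem_coeffs_iff.2 ⟨h.natDegree, ?_, rfl⟩, by simpa using h0⟩
    simpa using h0)
  obtain ⟨n, -, rfl⟩ := mem_coeffs_iff.1 ha
  refine ⟨n, ha0, fun j => ?_⟩
  by_cases hj : h.coeff j = 0
  · simp [hj]
  · exact hb _ (coeff_mem_coeffs hj)

theorem NS_of {f g : E[X]} {i : ℕ} (h0 : g.coeff i ≠ 0) (hf : ∀ j, f.coeff j / g.coeff i ∈ W)
    (hg : ∀ j, g.coeff j / g.coeff i ∈ W) : f.eval T / g.eval T ∈ NS (W : Set E) T := by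
  refine ⟨C (g.coeff i)⁻¹ * f, C (g.coeff i)⁻¹ * g, fun j => ?_, fun j => ?_, UC_of_coeff (i := i) ?_, ?_⟩
  · rw [coeff_C_mul, mul_comm, ← div_eq_mul_inv]; exact hf j
  · rw [coeff_C_mul, mul_comm, ← div_eq_mul_inv]; exact hg j
  · rw [coeff_C_mul, inv_mul_cancel₀ h0]
  · rw [eval_mul, eval_mul, eval_C, mul_div_mul_left _ _ (inv_ne_zero h0)]

theorem coeff_low (f g : E[X]) {N : ℕ} {i : ℕ} (hi : i < N) :
    (X ^ N * g + f).coeff i = f.coeff i := by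
  rw [coeff_add, coeff_X_pow_mul', if_neg (by omega), zero_add]

theorem coeff_high (f g : E[X]) {N : ℕ} (hN : f.natDegree < N) (i : ℕ) :
    (X ^ N * g + f).coeff (i + N) = g.coeff i := by
  rw [coeff_add, coeff_X_pow_mul, coeff_eq_zero_of_natDegree_lt (p := f) (by omega), add_zero]

theorem coeff_f (f g : E[X]) {N : ℕ} (hN : f.natDegree < N) (j : ℕ) :
    f.coeff j = 0 ∨ f.coeff j = (X ^ N * g + f).coeff j := by
  by_cases hj : j < N
  · exact Or.inr (coeff_low f g hj).symm
  · exact Or.inl (coeff_eq_zero_of_natDegree_lt (by omega))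

theorem NS_val (hv : ∀ x ∈ L, x ∈ W ∨ x⁻¹ ∈ W) {x : E}
    (hx : x ∈ Subfield.closure ((L : Set E) ∪ {T})) : x ∈ NS (W : Set E) T ∨ x⁻¹ ∈ NS (W : Set E) T := by
  obtain ⟨f, g, hf, hg, h0, rfl⟩ := K_rep hx
  have hg0 : g ≠ 0 := by rintro rfl; simp at h0
  set N := f.natDegree + 1 with hNdef
  have hN : f.natDegree < N := by omega
  have hh : CIn (L : Set E) (X ^ N * g + f) :=
    CIn.add (R := L.toSubring) (CIn.mul (R := L.toSubring) (CIn.Xpow N) hg) hf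
  have hh0 : X ^ N * g + f ≠ 0 := by
    intro h
    apply hg0
    ext i
    rw [← coeff_high f g hN i, h]; simp
  obtain ⟨i, hi, hj⟩ := max_coeff hv hh hh0
  have hfj : ∀ j, f.coeff j / (X ^ N * g + f).coeff i ∈ W := fun j => by
    rcases coeff_f f g hN j with h | h
    · simp [h]
    · rw [h]; exact hj j
  have hgj : ∀ j, g.coeff j / (X ^ N * g + f).coeff i ∈ W := fun j => by
    rw [← coeff_high f g hN j]; exact hj _
  by_cases hiN : i < N
  · right
    rw [coeff_low f g hiN] at hi hfj hgj
    rw [inv_div]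
    exact NS_of hi hgj hfj
  · left
    obtain ⟨d, rfl⟩ := Nat.exists_eq_add_of_le (not_lt.1 hiN)
    rw [add_comm N d, coeff_high f g hN] at hi hfj hgj
    exact NS_of hi hfj hgj

theorem approx (hT : TrOver (L : Set E) T) {x : E}
    (hx : x ∈ Subfield.closure ((L : Set E) ∪ {T})) :
    ∃ N0, ∀ N ≥ N0, 1 + x / T ^ N ≠ 0 ∧ ∀ W : Subring E, (∀ x ∈ L, x ∈ W ∨ x⁻¹ ∈ W) →
      (1 + x / T ^ N)⁻¹ ∈ NS (W : Set E) T ∧ x * (1 + x / T ^ N)⁻¹ ∈ NS (W : Set E) T := by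
  obtain ⟨f, g, hf, hg, h0, rfl⟩ := K_rep hx
  have hg0 : g ≠ 0 := by rintro rfl; simp at h0
  refine ⟨f.natDegree + 1, fun N hN' => ?_⟩
  have hN : f.natDegree < N := by omega
  have hT0 := hT.ne_zero
  have hh : CIn (L : Set E) (X ^ N * g + f) :=
    CIn.add (R := L.toSubring) (CIn.mul (R := L.toSubring) (CIn.Xpow N) hg) hf
  have hh0 : X ^ N * g + f ≠ 0 := by
    intro h
    apply hg0
    ext i
    rw [← coeff_high f g hN i, h]; simp
  have hev : (X ^ N * g + f).eval T ≠ 0 := fun h => hh0 (hT _ hh h)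
  have e1 : 1 + f.eval T / g.eval T / T ^ N = (X ^ N * g + f).eval T / (X ^ N * g).eval T := by
    simp only [eval_add, eval_mul, eval_pow, eval_X]
    field_simp
  have hXg : (X ^ N * g).eval T ≠ 0 := by
    simp only [eval_mul, eval_pow, eval_X]
    exact mul_ne_zero (pow_ne_zero _ hT0) h0
  refine ⟨by rw [e1]; exact div_ne_zero hev hXg, fun W hv => ?_⟩
  obtain ⟨i, hi, hj⟩ := max_coeff hv hh hh0
  have hfj : ∀ j, f.coeff j / (X ^ N * g + f).coeff i ∈ W := fun j => by
    rcases coeff_f f g hN j with h | h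
    · simp [h]
    · rw [h]; exact hj j
  have hgj : ∀ j, g.coeff j / (X ^ N * g + f).coeff i ∈ W := fun j => by
    rw [← coeff_high f g hN j]; exact hj _
  have sh : ∀ (p : E[X]), (∀ j, p.coeff j / (X ^ N * g + f).coeff i ∈ W) → 
      ∀ j, (X ^ N * p).coeff j / (X ^ N * g + f).coeff i ∈ W := fun p hp j => by
    rw [coeff_X_pow_mul']
    split_ifs
    · exact hp _
    · simp
  rw [e1, inv_div]
  refine ⟨NS_of hi (sh g hgj) hj, ?_⟩
  have e2 : f.eval T / g.eval T * ((X ^ N * g).eval T / (X ^ N * g + f).eval T)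
      = (X ^ N * f).eval T / (X ^ N * g + f).eval T := by
    rw [eval_mul, eval_mul]; field_simp
  rw [e2]
  exact NS_of hi (sh f hfj) hj

end TW

namespace TW
open Polynomial

section
variable (k0 : Type) [Field k0] (r : ℕ)

noncomputable def xv (i : TowerVars r) : Amb k0 r :=
  algebraMap (MvPolynomial (TowerVars r) k0) (Amb k0 r) (MvPolynomial.X i)

theorem xv_ind : AlgebraicIndependent k0 (xv k0 r) := by
  have h := MvPolynomial.algebraicIndependent_X (TowerVars r) k0
  exact h.map' (f := IsScalarTower.toAlgHom k0 (MvPolynomial (TowerVars r) k0) (Amb k0 r))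
    (IsFractionRing.injective _ _)

noncomputable def E0 (s : Set (TowerVars r)) : IntermediateField k0 (Amb k0 r) :=
  IntermediateField.adjoin k0 (xv k0 r '' s)

open scoped IntermediateField.algebraAdjoinAdjoin in
theorem E0_ind (s : Set (TowerVars r)) :
    AlgebraicIndependent (E0 k0 r s) (fun i : ↥sᶜ => xv k0 r i) := by
  have h := (xv_ind k0 r).adjoin_of_disjoint (s := s) (t := sᶜ) disjoint_compl_right
  exact h.extendScalars (IntermediateField.adjoin k0 (xv k0 r '' s))

theorem E0_tr (s : Set (TowerVars r)) {i : TowerVars r} (hi : i ∉ s) :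
    TrOver (E0 k0 r s : Set (Amb k0 r)) (xv k0 r i) := by
  have h := (E0_ind k0 r s).transcendental ⟨i, hi⟩
  intro p hp h0
  obtain ⟨q, rfl⟩ := lift_poly (W := (E0 k0 r s).toSubfield.toSubring) hp
  have h1 := (transcendental_iff.1 h) q (by
    rw [aeval_def, ← eval_map]; exact h0)
  rw [h1]; simp

theorem mem_of_isIntegral_frac {k σ : Type*} [Field k] (y : FractionRing (MvPolynomial σ k))
    (hy : IsIntegral k y) : ∃ c : k, y = algebraMap k _ c := by
  have h1 : IsIntegral (MvPolynomial σ k) y := hy.tower_top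
  obtain ⟨p, rfl⟩ := IsIntegrallyClosed.isIntegral_iff.1 h1
  have h2 : IsIntegral k p := by
    exact (isIntegral_algHom_iff (IsScalarTower.toAlgHom k (MvPolynomial σ k) (FractionRing (MvPolynomial σ k)))
      (IsFractionRing.injective _ _)).1 hy
  by_cases hp : p = 0
  · exact ⟨0, by simp [hp]⟩
  · have hu : IsUnit p := h2.isUnit hp
    obtain ⟨c, -, hc⟩ := MvPolynomial.isUnit_iff_eq_C_of_isReduced.1 hu
    refine ⟨c, ?_⟩
    rw [hc, IsScalarTower.algebraMap_apply k (MvPolynomial σ k)]; rfl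

theorem E0_top (s : Set (TowerVars r)) :
    IntermediateField.adjoin (E0 k0 r s) (Set.range (fun i : ↥sᶜ => xv k0 r i)) = ⊤ := by
  rw [eq_top_iff]
  rintro y -
  set A := IntermediateField.adjoin (E0 k0 r s) (Set.range (fun i : ↥sᶜ => xv k0 r i))
  have hx : ∀ i, xv k0 r i ∈ A := by
    intro i
    by_cases hi : i ∈ s
    · have : xv k0 r i ∈ E0 k0 r s := IntermediateField.subset_adjoin _ _ ⟨i, hi, rfl⟩
      exact A.algebraMap_mem ⟨_, this⟩
    · exact IntermediateField.subset_adjoin _ _ ⟨⟨i, hi⟩, rfl⟩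
  have hc : ∀ c : k0, algebraMap k0 (Amb k0 r) c ∈ A := fun c =>
    A.algebraMap_mem (algebraMap k0 (E0 k0 r s) c)
  have hp : ∀ p : MvPolynomial (TowerVars r) k0, algebraMap _ (Amb k0 r) p ∈ A := by
    intro p
    induction p using MvPolynomial.induction_on with
    | C a => 
      have := hc a
      rwa [IsScalarTower.algebraMap_apply k0 (MvPolynomial (TowerVars r) k0)] at this
    | add p q h1 h2 => rw [map_add]; exact A.add_mem h1 h2
    | mul_X p i h => rw [map_mul]; exact A.mul_mem h (hx i)
  obtain ⟨a, b, -, rfl⟩ := IsFractionRing.div_surjective (A := MvPolynomial (TowerVars r) k0) y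
  exact A.div_mem (hp a) (hp b)

theorem E0_closed (s : Set (TowerVars r)) :
    IsIntegrallyClosedIn (E0 k0 r s).toSubfield.toSubring (Amb k0 r) := by
  rw [Subring.isIntegrallyClosedIn_iff]
  intro y hy
  have hy' : IsIntegral (E0 k0 r s) y := hy
  let e := (E0_ind k0 r s).aevalEquivField
  have hmem : y ∈ IntermediateField.adjoin (E0 k0 r s) (Set.range (fun i : ↥sᶜ => xv k0 r i)) := by
    rw [E0_top]; trivial
  have h2 : IsIntegral (E0 k0 r s) (⟨y, hmem⟩ : IntermediateField.adjoin (E0 k0 r s)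
      (Set.range (fun i : ↥sᶜ => xv k0 r i))) :=
    (isIntegral_algHom_iff (IntermediateField.val _) (Subtype.val_injective)).1 hy'
  obtain ⟨c, hc⟩ := mem_of_isIntegral_frac _ (h2.map e.symm)
  have h3 := congrArg e hc
  rw [AlgEquiv.apply_symm_apply, AlgEquiv.commutes] at h3
  have h4 := congrArg Subtype.val h3
  have : y = (c : Amb k0 r) := h4
  rw [this]; exact c.2

def sk (n : ℕ) : Set (TowerVars r) := {v | ∃ i, 1 ≤ i ∧ i ≤ n ∧ v = Sum.inl i}
def sF (n : ℕ) : Set (TowerVars r) := sk r n ∪ Set.range (fun i => Sum.inr (Sum.inr i))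
def sK (n : ℕ) : Set (TowerVars r) := sF r n ∪ {Sum.inr (Sum.inl ())}

theorem base_mem (s : Set (TowerVars r)) : baseSet k0 r ⊆ (E0 k0 r s : Set (Amb k0 r)) := by
  rintro _ ⟨c, rfl⟩
  have := (E0 k0 r s).algebraMap_mem c
  rwa [IsScalarTower.algebraMap_apply k0 (MvPolynomial (TowerVars r) k0)] at this

theorem E0_mono {s t : Set (TowerVars r)} (h : s ⊆ t) : E0 k0 r s ≤ E0 k0 r t :=
  IntermediateField.adjoin.mono _ _ _ (Set.image_mono h)

theorem xv_mem {s : Set (TowerVars r)} {i : TowerVars r} (h : i ∈ s) : xv k0 r i ∈ E0 k0 r s :=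
  IntermediateField.subset_adjoin _ _ ⟨i, h, rfl⟩

theorem kfld_eq (n : ℕ) : kfld k0 r n = (E0 k0 r (sk r n)).toSubfield := by
  apply le_antisymm
  · unfold kfld
    rw [Subfield.closure_le]
    rintro x (hx | ⟨i, h1, h2, rfl⟩)
    · exact base_mem k0 r _ hx
    · exact xv_mem k0 r ⟨i, h1, h2, rfl⟩
  · intro x hx
    have hx' : x ∈ Subfield.closure (Set.range (algebraMap k0 (Amb k0 r)) ∪ xv k0 r '' (sk r n)) := hx
    revert hx'
    apply Subfield.closure_le.2
    rintro y (⟨c, rfl⟩ | ⟨_, ⟨i, h1, h2, rfl⟩, rfl⟩)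
    · apply Subfield.subset_closure
      left
      exact ⟨c, by rw [IsScalarTower.algebraMap_apply k0 (MvPolynomial (TowerVars r) k0)]; rfl⟩
    · exact Subfield.subset_closure (Or.inr ⟨i, h1, h2, rfl⟩)

theorem Ffld_le (n : ℕ) : Ffld k0 r n ≤ (E0 k0 r (sF r n)).toSubfield := by
  unfold Ffld
  rw [Subfield.closure_le]
  rintro x (hx | ⟨i, rfl⟩)
  · rw [kfld_eq] at hx
    exact E0_mono k0 r Set.subset_union_left hx
  · exact xv_mem k0 r (Or.inr ⟨i, rfl⟩)

theorem Kfld_le (n : ℕ) : Kfld k0 r n ≤ (E0 k0 r (sK r n)).toSubfield := by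
  unfold Kfld
  rw [Subfield.closure_le]
  rintro x (hx | rfl)
  · exact E0_mono k0 r Set.subset_union_left (Ffld_le k0 r n hx)
  · exact xv_mem k0 r (Or.inr rfl)

theorem Y_tr (n : ℕ) : TrOver (Ffld k0 r n : Set (Amb k0 r)) (ambY k0 r) := by
  refine (E0_tr k0 r (sF r n) (i := Sum.inr (Sum.inl ())) ?_).mono (Ffld_le k0 r n)
  simp [sF, sk]

theorem X_tr (n : ℕ) : TrOver (Kfld k0 r n : Set (Amb k0 r)) (ambX k0 r (n + 1)) := by
  refine (E0_tr k0 r (sK r n) (i := Sum.inl (n + 1)) ?_).mono (Kfld_le k0 r n)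
  simp [sK, sF, sk]

theorem Y_K (n : ℕ) : ambY k0 r ∈ Kfld k0 r n := Subfield.subset_closure (Or.inr rfl)
theorem F_K (n : ℕ) : Ffld k0 r n ≤ Kfld k0 r n := fun _ h => Subfield.subset_closure (Or.inl h)
theorem k_F (n : ℕ) : kfld k0 r n ≤ Ffld k0 r n := fun _ h => Subfield.subset_closure (Or.inl h)

theorem Y_ne : ambY k0 r ≠ 0 := (Y_tr k0 r 0).ne_zero

theorem X'_eq (n : ℕ) : ambX' k0 r n = ambX k0 r n + (ambY k0 r)⁻¹ := by
  have := Y_ne k0 r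
  unfold ambX'
  field_simp
  ring

theorem X'_tr (n : ℕ) : TrOver (Kfld k0 r n : Set (Amb k0 r)) (ambX' k0 r (n + 1)) := by
  intro p hp h0
  have hY : (ambY k0 r)⁻¹ ∈ Kfld k0 r n := Subfield.inv_mem _ (Y_K k0 r n)
  have h1 : p.comp (X + C (ambY k0 r)⁻¹) = 0 := by
    apply X_tr k0 r n
    · rw [comp_eq_sum_left, Polynomial.sum]
      have hR : ∀ m, CIn ((Kfld k0 r n).toSubring : Set (Amb k0 r)) ((X + C (ambY k0 r)⁻¹) ^ m) := by
        intro m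
        induction m with
        | zero => simpa using CIn.one (R := (Kfld k0 r n).toSubring)
        | succ m ih => rw [pow_succ]; exact ih.mul (CIn.X.add (CIn.C hY))
      intro i
      rw [finsetSum_coeff]
      exact (Kfld k0 r n).toSubring.sum_mem fun j _ => CIn.mul (R := (Kfld k0 r n).toSubring) 
        (CIn.C (R := (Kfld k0 r n).toSubring) (hp j)) (hR j) i
    · rw [eval_comp]
      simpa [X'_eq] using h0
  have h2 := congrArg (fun q => q.comp (X - C (ambY k0 r)⁻¹)) h1
  simpa [comp_assoc] using h2

theorem kfld_mono (n : ℕ) : kfld k0 r n ≤ kfld k0 r (n + 1) := by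
  unfold kfld
  apply Subfield.closure_mono
  rintro x (h | ⟨i, h1, h2, rfl⟩)
  · exact Or.inl h
  · exact Or.inr ⟨i, h1, by omega, rfl⟩
theorem Ffld_mono (n : ℕ) : Ffld k0 r n ≤ Ffld k0 r (n + 1) :=
  Subfield.closure_mono (Set.union_subset_union_left _ (kfld_mono k0 r n))
theorem Kfld_mono (n : ℕ) : Kfld k0 r n ≤ Kfld k0 r (n + 1) :=
  Subfield.closure_mono (Set.union_subset_union_left _ (Ffld_mono k0 r n))

theorem X_k (n : ℕ) (hn : 1 ≤ n) : ambX k0 r n ∈ kfld k0 r n :=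
  Subfield.subset_closure (Or.inr ⟨n, hn, le_rfl, rfl⟩)

/-- `K_{n+1} = K_n(X'_{n+1})`. -/
theorem Kfld_succ (n : ℕ) : Kfld k0 r (n + 1) =
    Subfield.closure ((Kfld k0 r n : Set (Amb k0 r)) ∪ {ambX' k0 r (n + 1)}) := by
  apply le_antisymm
  · set A := Subfield.closure ((Kfld k0 r n : Set (Amb k0 r)) ∪ {ambX' k0 r (n + 1)}) with hA
    have hK : Kfld k0 r n ≤ A := fun _ h => Subfield.subset_closure (Or.inl h)
    have hX' : ambX' k0 r (n + 1) ∈ A := Subfield.subset_closure (Or.inr rfl)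
    have hY := hK (Y_K k0 r n)
    have hX : ambX k0 r (n + 1) ∈ A := by
      have := A.sub_mem hX' (A.inv_mem hY)
      rwa [X'_eq, add_sub_cancel_right] at this
    have hk : kfld k0 r (n + 1) ≤ A := by
      unfold kfld
      rw [Subfield.closure_le]
      rintro x (hx | ⟨i, h1, h2, rfl⟩)
      · exact hK (F_K k0 r n (k_F k0 r n (Subfield.subset_closure (Or.inl hx))))
      · rcases Nat.lt_or_ge n i with h | h
        · have : i = n + 1 := by omega
          subst this; exact hX
        · exact hK (F_K k0 r n (k_F k0 r n (Subfield.subset_closure (Or.inr ⟨i, h1, h, rfl⟩))))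
    have hF : Ffld k0 r (n + 1) ≤ A := by
      unfold Ffld
      rw [Subfield.closure_le]
      rintro x (hx | hx)
      · exact hk hx
      · exact hK (F_K k0 r n (Subfield.subset_closure (Or.inr hx)))
    unfold Kfld
    rw [Subfield.closure_le]
    rintro x (hx | rfl)
    · exact hF hx
    · exact hY
  · rw [Subfield.closure_le]
    rintro x (hx | rfl)
    · exact Kfld_mono k0 r n hx
    · rw [X'_eq]
      exact Subfield.add_mem _ (F_K k0 r _ (k_F k0 r _ (X_k k0 r _ (by omega))))
        (Subfield.inv_mem _ (Y_K k0 r _))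

theorem Mset_eq (n : ℕ) : Mset k0 r n = MS (Ffld k0 r n) (ambY k0 r) := by
  have hY := Y_tr k0 r n
  ext x
  constructor
  · rintro ⟨_, ⟨f, hf, g, hg, hnd, rfl⟩, rfl⟩
    obtain ⟨f, hf2, rfl⟩ := polyRep.1 hf
    obtain ⟨g, hg2, rfl⟩ := polyRep.1 hg
    have : g.coeff 0 ≠ 0 := by
      intro h0
      refine hnd ⟨_, polyRep.2 ⟨g.divX, fun i => by rw [coeff_divX]; exact hg2 _, rfl⟩, ?_⟩
      conv_lhs => rw [← divX_mul_X_add g, h0]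
      simp [mul_comm]
    exact M_mul Y_M ⟨f, g, hf2, hg2, this, rfl⟩
  · rintro ⟨f, g, hf, hg, h1, h0, rfl⟩
    refine ⟨f.divX.eval (ambY k0 r) / g.eval (ambY k0 r), ⟨_, polyRep.2 ⟨f.divX, fun i => by rw [coeff_divX]; exact hf _, rfl⟩,
      _, polyRep.2 ⟨g, hg, rfl⟩, ?_, rfl⟩, ?_⟩
    · rintro ⟨_, hh, e⟩
      obtain ⟨h, hh2, rfl⟩ := polyRep.1 hh
      have : g - X * h = 0 := hY _ (CIn.sub (R := (Ffld k0 r n).toSubring) hg (CIn.mul CIn.X hh2)) (by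
        simp [e])
      apply h0
      rw [sub_eq_zero.1 this]
      simp
    · conv_lhs => rw [← divX_mul_X_add f, h1]
      simp; ring

theorem Aset_eq (n : ℕ) : Aset k0 r n = AS (kfld k0 r n) (Ffld k0 r n) (ambY k0 r) := by
  unfold Aset AS
  rw [Mset_eq]
  rfl

theorem D_A (n : ℕ) (hn : 1 ≤ n) : Dset k0 r n ⊆ Aset k0 r n := by
  match n, hn with
  | 1, _ => exact subset_rfl
  | n + 2, _ => exact Set.inter_subset_right

theorem A_K (n : ℕ) {x} (hx : x ∈ Aset k0 r n) : x ∈ Kfld k0 r n := by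
  rw [Aset_eq] at hx
  exact V_K (AS_V (Y_tr k0 r n) (k_F k0 r n) hx)

theorem sep_A (n : ℕ) (D : Set (Amb k0 r)) (hD : D ⊆ Aset k0 r n) {x} (hx : x ∈ Kfld k0 r n) (hxA : x ∉ Aset k0 r n) :
    ∃ W ∈ valOverringsIn k0 r D (Kfld k0 r n), x ∉ W := by
  have : IsIntegrallyClosedIn (kfld k0 r n).toSubring (Amb k0 r) := by
    rw [kfld_eq]; exact E0_closed k0 r _
  rw [Aset_eq] at hxA hD
  obtain ⟨W, h1, h2, h3, h4⟩ := A_sep (Y_tr k0 r n) (k_F k0 r n) hx hxA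
  exact ⟨W, ⟨hD.trans h1, h2, h3⟩, h4⟩

theorem sep (n : ℕ) (hn : 1 ≤ n) {x} (hx : x ∈ Kfld k0 r n) (hxD : x ∉ Dset k0 r n) :
    ∃ W ∈ valOverringsIn k0 r (Dset k0 r n) (Kfld k0 r n), x ∉ W := by
  by_cases hxA : x ∈ Aset k0 r n
  · match n, hn with
    | 1, _ => exact absurd hxA hxD
    | n + 2, _ =>
      have hB : x ∉ krSet k0 r (Dset k0 r (n + 1)) (Kfld k0 r (n + 1)) (ambX' k0 r (n + 2)) :=
        fun h => hxD ⟨h, hxA⟩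
      unfold krSet at hB
      simp only [Set.mem_iInter, not_forall] at hB
      obtain ⟨W, hW, hxW⟩ := hB
      obtain ⟨h1, h2, h3⟩ := hW
      refine ⟨nagRing h2 (X'_tr k0 r (n + 1)), ⟨?_, ?_, ?_⟩, hxW⟩
      · intro y hy
        have := hy.1
        unfold krSet at this
        simp only [Set.mem_iInter] at this
        exact this W ⟨h1, h2, h3⟩
      · intro y hy
        rw [Kfld_succ]
        exact NS_K h2 hy
      · intro y hy
        rw [Kfld_succ] at hy
        exact NS_val h3 hy
  · exact sep_A k0 r n _ (D_A k0 r n hn) hx hxA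

theorem part2 (n : ℕ) : MMset k0 r (n + 2) ∩ (Kfld k0 r (n + 1) : Set (Amb k0 r)) = MMset k0 r (n + 1) := by
  ext x
  constructor
  · rintro ⟨⟨hM, hD⟩, hK⟩
    have hK : x ∈ Kfld k0 r (n + 1) := hK
    refine ⟨?_, ?_⟩
    · rw [Mset_eq] at hM ⊢
      exact MS_inter (Ffld_mono k0 r (n + 1)) (Y_tr k0 r (n + 2)) hM hK
    · by_contra hxD
      obtain ⟨W, hW, hxW⟩ := sep k0 r (n + 1) (by omega) hK hxD
      have := hD.1
      unfold krSet at this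
      simp only [Set.mem_iInter] at this
      exact hxW (NS_inter hW.2.1 (X'_tr k0 r (n + 1)) (this W hW) hK)
  · rintro ⟨hM, hD⟩
    have hM' : x ∈ Mset k0 r (n + 2) := by
      rw [Mset_eq] at hM ⊢
      exact MS_mono (Ffld_mono k0 r (n + 1)) hM
    refine ⟨⟨hM', ?_, ?_⟩, A_K k0 r _ (D_A k0 r _ (by omega) hD)⟩
    · unfold krSet
      simp only [Set.mem_iInter]
      intro W hW
      exact W_NS (hW.1 hD)
    · exact ⟨0, Subfield.zero_mem _, x, hM', by simp⟩

theorem X'_inv_M (n : ℕ) (hn : 1 ≤ n) : (ambX' k0 r n)⁻¹ ∈ MS (Ffld k0 r n) (ambY k0 r) := by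
  have hX := k_F k0 r n (X_k k0 r n hn)
  refine ⟨X, 1 + X * C (ambX k0 r n), CIn.X (R := (Ffld k0 r n).toSubring), 
    CIn.add (R := (Ffld k0 r n).toSubring) CIn.one (CIn.mul CIn.X (CIn.C hX)), by simp, by simp, ?_⟩
  simp [ambX']
  rw [mul_comm (ambX k0 r n)]

/-- the key approximation: every element of `A_{n+2}` is a fraction over `D_{n+2}` with denominator
congruent to `1`. -/
theorem key (n : ℕ) {x} (hx : x ∈ Aset k0 r (n + 2)) : ∃ e ∈ Dset k0 r (n + 2),
    e - 1 ∈ MS (Ffld k0 r (n + 2)) (ambY k0 r) ∧ x * e ∈ Dset k0 r (n + 2) := by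
  have hY := Y_tr k0 r (n + 2)
  have hxK := A_K k0 r _ hx
  have hxK' := hxK
  rw [Kfld_succ] at hxK'
  obtain ⟨N0, hN0⟩ := approx (X'_tr k0 r (n + 1)) hxK'
  obtain ⟨N, hN, hm⟩ : ∃ N, N ≥ N0 ∧ x / ambX' k0 r (n + 2) ^ N ∈ MS (Ffld k0 r (n + 2)) (ambY k0 r) := by
    by_cases hx0 : x = 0
    · exact ⟨N0, le_rfl, by rw [hx0, zero_div]; exact M_zero⟩
    · obtain ⟨N1, h1⟩ := M_pow hY (X'_inv_M k0 r (n + 2) (by omega)) hxK hx0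
      refine ⟨max N0 N1, le_max_left _ _, ?_⟩
      have := h1 (max N0 N1) (le_max_right _ _)
      rwa [inv_pow, mul_comm, ← div_eq_mul_inv] at this
  obtain ⟨hne, hW⟩ := hN0 N hN
  set m := x / ambX' k0 r (n + 2) ^ N with hmdef
  have hVinv : (1 + m)⁻¹ ∈ VS (Ffld k0 r (n + 2)) (ambY k0 r) := by
    rcases V_val hY (Subfield.inv_mem _ (V_K (V_add hY (F_V (Subfield.one_mem _)) (M_V hm)))) with h | h
    · exact h
    · exfalso
      rw [inv_inv] at h
      have := M_sub hY h hm
      rw [add_sub_cancel_right] at this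
      exact one_not_M hY this
  have he1 : (1 + m)⁻¹ - 1 ∈ MS (Ffld k0 r (n + 2)) (ambY k0 r) := by
    have : (1 + m)⁻¹ - 1 = (-m) * (1 + m)⁻¹ := by field_simp; ring
    rw [this]; exact M_mul (M_neg hm) hVinv
  have hVx : x ∈ VS (Ffld k0 r (n + 2)) (ambY k0 r) := by
    rw [Aset_eq] at hx; exact AS_V hY (k_F k0 r _) hx
  refine ⟨(1 + m)⁻¹, ⟨?_, ?_⟩, he1, ?_, ?_⟩
  · unfold krSet
    simp only [Set.mem_iInter]
    intro W hW'
    exact (hW W hW'.2.2).1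
  · rw [Aset_eq]
    exact ⟨1, Subfield.one_mem _, _, he1, by ring⟩
  · unfold krSet
    simp only [Set.mem_iInter]
    intro W hW'
    exact (hW W hW'.2.2).2
  · rw [Aset_eq] at hx ⊢
    obtain ⟨c, hc, m', hm', e⟩ := hx
    refine ⟨c, hc, m' + ((1 + m)⁻¹ - 1) * x, M_add hY hm' (M_mul he1 hVx), ?_⟩
    linear_combination e

theorem part1 (n : ℕ) (D' : Subring (Amb k0 r)) (hD : (D' : Set (Amb k0 r)) = Dset k0 r (n + 2))
    (I : Ideal ↥D') (hI : Subtype.val '' (I : Set ↥D') = MMset k0 r (n + 2)) :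
    I.IsMaximal ∧ I ≠ ⊥ ∧ ∀ Q : Ideal ↥D', Q.IsPrime → Q < I → Q = ⊥ := by
  have hY := Y_tr k0 r (n + 2)
  have memD : ∀ x, x ∈ D' ↔ x ∈ Dset k0 r (n + 2) := fun x => by rw [← hD]; rfl
  have memI : ∀ x : D', x ∈ I ↔ (x : Amb k0 r) ∈ MS (Ffld k0 r (n + 2)) (ambY k0 r) := by
    intro x
    rw [← Mset_eq]
    constructor
    · intro hx
      have : (x : Amb k0 r) ∈ Subtype.val '' (I : Set ↥D') := ⟨x, hx, rfl⟩
      rw [hI] at this; exact this.1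
    · intro hx
      have : (x : Amb k0 r) ∈ Subtype.val '' (I : Set ↥D') := by
        rw [hI]; exact ⟨hx, (memD _).1 x.2⟩
      obtain ⟨y, hy, e⟩ := this
      have : y = x := Subtype.ext e
      exact this ▸ hy
  have h1I : (1 : D') ∉ I := fun h => one_not_M hY ((memI _).1 h)
  have MA : ∀ m ∈ MS (Ffld k0 r (n + 2)) (ambY k0 r), m ∈ Aset k0 r (n + 2) := fun m hm => by
    rw [Aset_eq]; exact ⟨0, Subfield.zero_mem _, m, hm, by simp⟩
  have kA : ∀ c ∈ kfld k0 r (n + 2), c ∈ Aset k0 r (n + 2) := fun c hc => by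
    rw [Aset_eq]; exact ⟨c, hc, 0, M_zero, by simp⟩
  have ene : ∀ e : Amb k0 r, e - 1 ∈ MS (Ffld k0 r (n + 2)) (ambY k0 r) → 
      e ∉ MS (Ffld k0 r (n + 2)) (ambY k0 r) := fun e h1 h2 => by
    have := M_sub hY h2 h1
    rw [sub_sub_cancel] at this
    exact one_not_M hY this
  refine ⟨?_, ?_, ?_⟩
  · rw [Ideal.isMaximal_iff]
    refine ⟨h1I, fun J x hIJ hxI hxJ => ?_⟩
    have hxM : (x : Amb k0 r) ∉ MS (Ffld k0 r (n + 2)) (ambY k0 r) := fun h => hxI ((memI x).2 h)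
    have hxA := D_A k0 r (n + 2) (by omega) ((memD _).1 x.2)
    rw [Aset_eq] at hxA
    have hxV := AS_V hY (k_F k0 r _) hxA
    obtain ⟨c, hc, m, hm, ex⟩ := hxA
    have hc0 : c ≠ 0 := by rintro rfl; exact hxM (by rw [ex, zero_add]; exact hm)
    obtain ⟨e, he, he1, hce⟩ := key k0 r n (kA _ (Subfield.inv_mem _ hc))
    let y : D' := ⟨c⁻¹ * e, (memD _).2 hce⟩
    have hz : x * y - 1 ∈ I := by
      rw [memI]
      have : ((x * y - 1 : D') : Amb k0 r) = (e - 1) * (x * c⁻¹) + m * c⁻¹ := by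
        push_cast
        have : (y : Amb k0 r) = c⁻¹ * e := rfl
        rw [this, ex]
        field_simp
        ring
      rw [this]
      have hcV := F_V (Y := ambY k0 r) (Subfield.inv_mem _ (k_F k0 r _ hc))
      exact M_add hY (M_mul he1 (V_mul hxV hcV)) (M_mul hm hcV)
    have := J.sub_mem (J.mul_mem_right y hxJ) (hIJ hz)
    rwa [sub_sub_cancel] at this
  · obtain ⟨e, he, he1, hYe⟩ := key k0 r n (MA _ Y_M)
    intro hbot
    have hmem : (⟨ambY k0 r * e, (memD _).2 hYe⟩ : D') ∈ I := by
      rw [memI]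
      have hV : e ∈ VS (Ffld k0 r (n + 2)) (ambY k0 r) := by
        have := V_add hY (M_V he1) (F_V (Subfield.one_mem _))
        rwa [sub_add_cancel] at this
      exact M_mul Y_M hV
    rw [hbot, Ideal.mem_bot] at hmem
    have h0 : ambY k0 r * e = 0 := congrArg Subtype.val hmem
    rcases mul_eq_zero.1 h0 with h | h
    · exact Y_ne k0 r h
    · exact ene e he1 (h ▸ M_zero)
  · intro Q hQ hQI
    by_contra hQ0
    obtain ⟨q, hqQ, hq0⟩ := Submodule.exists_mem_ne_zero_of_ne_bot hQ0
    obtain ⟨m, hmI, hmQ⟩ := SetLike.exists_of_lt hQI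
    have hqK : (q : Amb k0 r) ∈ Kfld k0 r (n + 2) := A_K k0 r _ (D_A k0 r _ (by omega) ((memD _).1 q.2))
    have hq0' : (q : Amb k0 r) ≠ 0 := fun h => hq0 (Subtype.ext h)
    obtain ⟨N, hN⟩ := M_pow hY ((memI m).1 hmI) (Subfield.inv_mem _ hqK) (inv_ne_zero hq0')
    obtain ⟨e, he, he1, hae⟩ := key k0 r n (MA _ (hN N le_rfl))
    have heq : m ^ N * (⟨e, (memD _).2 he⟩ : D') = q * ⟨_, (memD _).2 hae⟩ := by
      apply Subtype.ext
      push_cast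
      field_simp
    have h1 : m ^ N * (⟨e, (memD _).2 he⟩ : D') ∈ Q := by
      rw [heq]; exact Q.mul_mem_right _ hqQ
    rcases hQ.mem_or_mem h1 with h | h
    · exact hmQ (hQ.mem_of_pow_mem _ h)
    · exact ene e he1 ((memI _).1 (hQI.le h))

end
end TW

/-- In the tower construction, for every `n ≥ 2`, `𝓜ₙ := Mₙ ∩ Dₙ` is
a height-one maximal ideal of `Dₙ`, and `𝓜ₙ ∩ K_{n-1} = 𝓜_{n-1}`. -/
theorem tower_MM_heightOne_maximal
    (k0 : Type) [Field k0] (r : ℕ) (hr : 2 ≤ r) (n : ℕ) (hn : 2 ≤ n) :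
    (∀ D' : Subring (Amb k0 r), (D' : Set (Amb k0 r)) = Dset k0 r n →
      ∀ I : Ideal ↥D', Subtype.val '' (I : Set ↥D') = MMset k0 r n →
        I.IsMaximal ∧ I ≠ ⊥ ∧
        ∀ Q : Ideal ↥D', Q.IsPrime → Q < I → Q = ⊥) ∧
    MMset k0 r n ∩ (Kfld k0 r (n - 1) : Set (Amb k0 r)) = MMset k0 r (n - 1) := by
  obtain ⟨n, rfl⟩ : ∃ m, n = m + 2 := ⟨n - 2, by omega⟩
  exact ⟨fun D' hD I hI => TW.part1 k0 r n D' hD I hI, TW.part2 k0 r n⟩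
end
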